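/- arXiv:2510.18451 — 2 statements merged into one kernel-verified Lean document; each statement's English description precedes it below -/
import Mathlib

section
/- Let τ₁ be a natural number with τ₁ ≥ 3 and let Ψ : (0,∞) → (0,∞) be given by Ψ(q) = q^{−τ₁}. If ω : (0,∞) → (0,∞) is given by ω(q) = C·q^{−τ₁(τ₁−1)} for some constant C > (45/16)·8^{τ₁}, then dim_H(E(Ψ,ω)) = 2/τ₁². -/
/-!
Write `τ = τ₁`. A point `x` of `E(Ψ, ω)` lies, for infinitely many fractions `p / q`, within
`C q^(-τ²)` of one of the two points `p / q ± q^(-τ)`. Covering a bounded part of `E(Ψ, ω)` by these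
windows with `q ≥ n`, of which there are `O(q)` for each `q`, gives finite `d`-dimensional Hausdorff
measure as soon as `∑ q · q^(-τ² d)` converges, that is for `d > 2 / τ²` (`dimH_ESet_le`).

For the lower bound, attach to a rational `v` of denominator `q` the window of the points
`v + q^(-τ) - θ q^(-τ²)`, `1 ≤ θ ≤ 2`. The point `v + q^(-τ)` is itself a reduced fraction, of
denominator `q^τ`; so any fraction of denominator between `q` and `q^(τ(τ-1)) / 4` is repelled either
by `v` or by `v + q^(-τ)`, and points of the window satisfy the lower bound required in the
definition of `E(Ψ, ω)` against it, as soon as `C ≥ 2` (`win_lower`). If `x` lies in the windows of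
a sequence of rationals of increasing denominators, each of which keeps away from the fractions of
denominator between `q^(τ(τ-1)) / 4` and its own one (`Avoids`), `q` being the denominator of its
predecessor, then `x ∈ E(Ψ, ω)` (`mem_ESet_of_chain`).

Such sequences are abundant. The points near fractions of intermediate denominator
fill only a small part of the window of `v`, of length `L = q^(-τ²)`, because
`q^(τ²) = o(q^(τ(τ-1)(τ-1)))` when `τ ≥ 3`; so do, for large `N`, the points with an approximation
of order `1 / (s N)` of denominator `s ≤ N / 16` (`volume_good_ge`). By Dirichlet's theorem
the remaining points are `16 / N²`-close to rationals of denominator in `(N / 16, N]`, hence there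
are at least `L N² / 128` admissible rationals in the window (`exists_many`), and they are
`1 / N²`-separated. Iterating gives a Cantor set inside `E(Ψ, ω)`. For `r < 2 / τ²` and `N` large
enough at each step, the coding map from this set onto `[0, 1)` is `r`-Hölder, and the set has
dimension at least `r` (`le_dimH_of_tree`, `le_dimH_ESet`).
-/

open Filter Set

/-- A real number `x` is `Ψ`-approximable: `|x - p/q| ≤ Ψ q` for infinitely many
pairs `(p, q) ∈ ℤ × ℕ` (with `q > 0`).  `WSet Ψ` is the set `W(Ψ)` of such `x`. -/
def WSet (Ψ : ℝ → ℝ) : Set ℝ :=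
  {x : ℝ | {pq : ℤ × ℕ | 0 < pq.2 ∧ |x - (pq.1 : ℝ) / (pq.2 : ℝ)| ≤ Ψ (pq.2 : ℝ)}.Infinite}

/-- `ESet Ψ ω` is the set `E(Ψ, ω)` of `x ∈ W(Ψ)` such that for all sufficiently large
`q ∈ ℕ` one has `|x - p/q| ≥ (1 - ω q) * Ψ q` for every `p ∈ ℤ`. -/
def ESet (Ψ ω : ℝ → ℝ) : Set ℝ :=
  {x : ℝ | x ∈ WSet Ψ ∧ ∃ Q : ℕ, ∀ q : ℕ, Q ≤ q → ∀ p : ℤ,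
    (1 - ω (q : ℝ)) * Ψ (q : ℝ) ≤ |x - (p : ℝ) / (q : ℝ)|}

/-! ### Dimension of Cantor sets given by trees of intervals -/

/-- Lower bound for the dimension of a Cantor set given by a tree of intervals. The node `v` carries
`Icc (lo v) (hi v)` and has `m v` children `ch v i`, consecutive ones being `ε v` apart. The weight
`B v` controls the loss at `v`: the conditions on `B` make the map sending a point of the set to
the number in `[0, 1)` whose mixed radix digits are its choices of children `r`-Hölder, with
constant `2 * B v₀`. This map is onto `[0, 1)`, a set of dimension `1`. -/
theorem le_dimH_of_tree {α : Type*} (lo hi ε B : α → ℝ) (m : α → ℕ) (ch : α → ℕ → α)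
    {r : ℝ} (hr0 : 0 < r) (hr1 : r ≤ 1)
    (hm : ∀ v, 2 ≤ m v) (hε : ∀ v, 0 < ε v) (hlohi : ∀ v, lo v ≤ hi v)
    (hnest : ∀ v, ∀ i < m v, Icc (lo (ch v i)) (hi (ch v i)) ⊆ Icc (lo v) (hi v))
    (hsep : ∀ v i j, i < j → j < m v →
      hi (ch v i) + ((j : ℝ) - i) * ε v ≤ lo (ch v j))
    (hB0 : ∀ v, 0 < B v)
    (hB : ∀ v, 1 ≤ B v * (m v * ε v) ^ r)
    (hBch : ∀ v, ∀ i < m v, B (ch v i) ≤ m v * B v)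
    (v₀ : α) (K : Set ℝ)
    (hK : ∀ (x : ℝ) (v : ℕ → α), v 0 = v₀ →
      (∀ k, ∃ i < m (v k), v (k + 1) = ch (v k) i) →
      (∀ k, x ∈ Icc (lo (v k)) (hi (v k))) → x ∈ K) :
    ENNReal.ofReal r ≤ dimH K := by
  -- One step of the digit expansion: in state `(v, u)` the next digit is `⌊u * m v⌋`.
  set T : α × ℝ → α × ℝ := fun s =>
    (ch s.1 ⌊s.2 * m s.1⌋₊, s.2 * m s.1 - ⌊s.2 * m s.1⌋₊) with hT
  have hmpos : ∀ v, (0 : ℝ) < m v := fun v => by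
    have := hm v
    exact_mod_cast (by omega : 0 < m v)
  have hTmem : ∀ s : α × ℝ, s.2 ∈ Ico (0 : ℝ) 1 → (T s).2 ∈ Ico (0 : ℝ) 1 := by
    rintro ⟨v, u⟩ ⟨h0, h1⟩
    have h2 : 0 ≤ u * m v := mul_nonneg h0 (hmpos v).le
    have h3 := Nat.floor_le h2
    have h4 := Nat.lt_floor_add_one (u * m v)
    constructor <;> simp only [hT] <;> linarith
  have hdig : ∀ (v : α) (u : ℝ), u ∈ Ico (0 : ℝ) 1 → ⌊u * m v⌋₊ < m v := by
    rintro v u ⟨h0, h1⟩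
    rw [Nat.floor_lt (mul_nonneg h0 (hmpos v).le)]
    nlinarith [hmpos v]
  have hitmem : ∀ (u : ℝ), u ∈ Ico (0 : ℝ) 1 → ∀ v k, (T^[k] (v, u)).2 ∈ Ico (0 : ℝ) 1 := by
    intro u hu v k
    induction k with
    | zero => simpa using hu
    | succ k ih => rw [Function.iterate_succ_apply']; exact hTmem _ ih
  have hpt : ∀ u ∈ Ico (0 : ℝ) 1, ∃ x : ℝ, ∀ k,
      x ∈ Icc (lo (T^[k] (v₀, u)).1) (hi (T^[k] (v₀, u)).1) := by
    intro u hu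
    have hanti : Antitone fun k => Icc (lo (T^[k] (v₀, u)).1) (hi (T^[k] (v₀, u)).1) := by
      refine antitone_nat_of_succ_le fun k => ?_
      rw [Function.iterate_succ_apply']
      exact hnest _ _ (hdig _ _ (hitmem u hu v₀ k))
    refine ⟨_, fun k => mem_iInter.1 (ciSup_mem_iInter_Icc_of_antitone_Icc hanti fun k => hlohi _) k⟩
  -- The Hölder estimate at an arbitrary node, by induction on `n`, where `2 ^ (-n)` bounds the
  -- distance of the parameters from below: as long as the digits agree, passing to the child
  -- multiplies this distance by `m v ≥ 2`.
  have key : ∀ (n : ℕ) (v : α) (u u' x x' : ℝ), u ∈ Ico (0 : ℝ) 1 → u' ∈ Ico (0 : ℝ) 1 →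
      (∀ k, x ∈ Icc (lo (T^[k] (v, u)).1) (hi (T^[k] (v, u)).1)) →
      (∀ k, x' ∈ Icc (lo (T^[k] (v, u')).1) (hi (T^[k] (v, u')).1)) →
      1 ≤ |u - u'| * 2 ^ n → |u - u'| ≤ 2 * B v * |x - x'| ^ r := by
    intro n
    induction n with
    | zero =>
      intro v u u' x x' hu hu' _ _ h
      exfalso
      have : |u - u'| < 1 := abs_sub_lt_iff.2 ⟨by linarith [hu.2, hu'.1], by linarith [hu'.2, hu.1]⟩
      linarith [h, pow_zero (2 : ℝ)]
    | succ n ih =>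
      intro v u u' x x' hu hu' hx hx' h
      have hmv := hmpos v
      by_cases hij : ⌊u * m v⌋₊ = ⌊u' * m v⌋₊
      · have h1 := ih (ch v ⌊u * m v⌋₊) (T (v, u)).2 (T (v, u')).2 x x' (hTmem _ hu) (hTmem _ hu')
          (fun k => hx (k + 1)) (fun k => by
            have := hx' (k + 1)
            rw [Function.iterate_succ_apply] at this
            simp only [hT] at this ⊢
            rwa [hij])
        have h2 : (T (v, u)).2 - (T (v, u')).2 = (u - u') * m v := by
          simp only [hT, hij]; ring
        rw [h2, abs_mul, abs_of_pos hmv] at h1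
        have hm2 : (2 : ℝ) ≤ m v := by exact_mod_cast hm v
        have h3 := h1 (by
          refine h.trans ?_
          rw [pow_succ]
          have : 0 ≤ |u - u'| * 2 ^ n := by positivity
          nlinarith)
        have h4 := hBch v _ (hdig v u hu)
        have h5 : 0 ≤ |x - x'| ^ r := by positivity
        have h6 : |u - u'| * m v ≤ (2 * B v * |x - x'| ^ r) * m v := by
          refine h3.trans ?_
          nlinarith [mul_le_mul_of_nonneg_right h4 h5]
        exact le_of_mul_le_mul_right h6 hmv
      · -- The digits differ, so the separation of the children applies.
        clear ih
        have main : ∀ (u u' x x' : ℝ), u ∈ Ico (0 : ℝ) 1 → u' ∈ Ico (0 : ℝ) 1 →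
            (∀ k, x ∈ Icc (lo (T^[k] (v, u)).1) (hi (T^[k] (v, u)).1)) →
            (∀ k, x' ∈ Icc (lo (T^[k] (v, u')).1) (hi (T^[k] (v, u')).1)) →
            ⌊u * m v⌋₊ < ⌊u' * m v⌋₊ → |u - u'| ≤ 2 * B v * |x - x'| ^ r := by
          intro u u' x x' hu hu' hx hx' hlt
          have hs := hsep v _ _ hlt (hdig v u' hu')
          have a1 := (hx 1).2
          have a2 := (hx' 1).1
          simp only [Function.iterate_one, hT] at a1 a2
          have b1 := Nat.floor_le (mul_nonneg hu.1 hmv.le)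
          have b3 := Nat.lt_floor_add_one (u' * m v)
          have b4 := Nat.floor_le (mul_nonneg hu'.1 hmv.le)
          have b5 := Nat.lt_floor_add_one (u * m v)
          have b6 := hdig v u' hu'
          generalize ⌊u * m v⌋₊ = i at *
          generalize ⌊u' * m v⌋₊ = j at *
          set d : ℝ := (j : ℝ) - i with hd
          have hd1 : 1 ≤ d := by
            have : (i : ℝ) + 1 ≤ j := by exact_mod_cast hlt
            linarith
          have hdm : d ≤ m v := by
            have : (j : ℝ) ≤ m v := by exact_mod_cast b6.le
            have : (0 : ℝ) ≤ i := by positivity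
            linarith
          have c1 : d * ε v ≤ |x - x'| := by
            rw [abs_sub_comm]; exact le_trans (by linarith) (le_abs_self _)
          have huu : u < u' := by
            by_contra hcon
            push Not at hcon
            have := mul_le_mul_of_nonneg_right hcon hmv.le
            linarith
          have c2 : |u - u'| ≤ 2 * (d / m v) := by
            rw [abs_sub_comm, abs_of_pos (by linarith), ← mul_div_assoc, le_div_iff₀ hmv]
            nlinarith
          have c3 : d / m v ≤ (d / m v) ^ r := by
            have := Real.rpow_le_rpow_of_exponent_ge (x := d / m v) (by positivity)
              ((div_le_one hmv).2 hdm) hr1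
            simpa using this
          have c4 : (d / m v) ^ r ≤ B v * (d * ε v) ^ r := by
            have e1 : d * ε v = (d / m v) * (m v * ε v) := by field_simp
            rw [e1, Real.mul_rpow (by positivity) (mul_nonneg hmv.le (hε v).le)]
            have : 0 ≤ (d / m v) ^ r := by positivity
            nlinarith [hB v]
          have c5 : (d * ε v) ^ r ≤ |x - x'| ^ r :=
            Real.rpow_le_rpow (mul_nonneg (by linarith) (hε v).le) c1 hr0.le
          nlinarith [mul_le_mul_of_nonneg_left c5 (hB0 v).le]
        rcases lt_or_gt_of_ne hij with hlt | hlt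
        · exact main u u' x x' hu hu' hx hx' hlt
        · rw [abs_sub_comm, abs_sub_comm x x']
          exact main u' u x' x hu' hu hx' hx hlt
  choose! g hg using hpt
  have hgK : ∀ u ∈ Ico (0 : ℝ) 1, g u ∈ K := fun u hu =>
    hK (g u) (fun k => (T^[k] (v₀, u)).1) rfl
      (fun k => ⟨_, hdig _ _ (hitmem u hu v₀ k), by rw [Function.iterate_succ_apply']⟩) (hg u hu)
  have hold : ∀ u ∈ Ico (0 : ℝ) 1, ∀ u' ∈ Ico (0 : ℝ) 1,
      |u - u'| ≤ 2 * B v₀ * |g u - g u'| ^ r := by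
    intro u hu u' hu'
    rcases eq_or_ne u u' with rfl | hne
    · simp [Real.zero_rpow hr0.ne']
    · have hpos : 0 < |u - u'| := abs_pos.2 (sub_ne_zero.2 hne)
      obtain ⟨n, hn⟩ := pow_unbounded_of_one_lt (1 / |u - u'|) (one_lt_two : (1 : ℝ) < 2)
      refine key n v₀ u u' _ _ hu hu' (hg u hu) (hg u' hu') ?_
      rw [div_lt_iff₀ hpos] at hn
      linarith
  have hinj : InjOn g (Ico 0 1) := by
    intro u hu u' hu' he
    have := hold u hu u' hu'
    rw [he] at this
    simp only [sub_self, abs_zero, Real.zero_rpow hr0.ne', mul_zero] at this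
    exact sub_eq_zero.1 (abs_nonpos_iff.1 this)
  have hinv : ∀ u ∈ Ico (0 : ℝ) 1, Function.invFunOn g (Ico 0 1) (g u) = u :=
    fun u hu => hinj.leftInvOn_invFunOn hu
  have hH : HolderOnWith (Real.toNNReal (2 * B v₀)) r.toNNReal (Function.invFunOn g (Ico 0 1))
      (g '' Ico 0 1) := by
    rintro _ ⟨u, hu, rfl⟩ _ ⟨u', hu', rfl⟩
    rw [hinv u hu, hinv u' hu', edist_dist, edist_dist, Real.dist_eq, Real.dist_eq,
      ENNReal.ofReal_rpow_of_nonneg (abs_nonneg _) (by positivity), Real.coe_toNNReal _ hr0.le]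
    change _ ≤ ENNReal.ofReal _ * _
    rw [← ENNReal.ofReal_mul (by linarith [hB0 v₀])]
    exact ENNReal.ofReal_le_ofReal (hold u hu u' hu')
  have hdim := hH.dimH_image_le (by simpa using hr0)
  have himg : Function.invFunOn g (Ico 0 1) '' (g '' Ico 0 1) = Ico 0 1 := by
    rw [← image_comp]
    ext t
    constructor
    · rintro ⟨u, hu, rfl⟩; simpa [hinv u hu] using hu
    · intro ht; exact ⟨t, ht, hinv t ht⟩
  rw [himg, Real.dimH_of_nonempty_interior (by rw [interior_Ico]; exact nonempty_Ioo.2 one_pos)] at hdim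
  have hrr : ((r.toNNReal : NNReal) : ENNReal) = ENNReal.ofReal r := rfl
  rw [hrr] at hdim
  have h2 : dimH (g '' Ico 0 1) ≤ dimH K := dimH_mono (by rintro _ ⟨u, hu, rfl⟩; exact hgK u hu)
  rw [ENNReal.le_div_iff_mul_le (Or.inl (by simpa using hr0)) (Or.inl (by simp))] at hdim
  simpa using hdim.trans h2

/-! ### Windows and the approximation properties of their points -/

theorem Psi_eq (τ q : ℕ) : (q : ℝ) ^ (-(τ : ℝ)) = 1 / (q : ℝ) ^ τ := by
  rw [Real.rpow_neg (Nat.cast_nonneg q), Real.rpow_natCast, one_div]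

theorem omega_Psi_eq (τ q : ℕ) (hτ : 3 ≤ τ) (hq : 0 < q) (C : ℝ) :
    (1 - C * (q : ℝ) ^ (-((τ : ℝ) * ((τ : ℝ) - 1)))) * (q : ℝ) ^ (-(τ : ℝ)) =
      1 / (q : ℝ) ^ τ - C / (q : ℝ) ^ (τ * τ) := by
  have hq' : (0 : ℝ) < q := by exact_mod_cast hq
  have h1 : (τ : ℝ) * ((τ : ℝ) - 1) = ((τ * (τ - 1) : ℕ) : ℝ) := by
    rw [Nat.cast_mul, Nat.cast_sub (by omega)]; simp
  have h2 : τ * τ = τ * (τ - 1) + τ := by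
    obtain ⟨n, rfl⟩ := Nat.exists_eq_add_of_le hτ
    simp only [show 3 + n - 1 = 2 + n by omega]; ring
  rw [h1, Psi_eq, Psi_eq, h2, pow_add]
  field_simp

/-- Distinct fractions repel each other. -/
theorem inv_mul_le_abs_sub (a b : ℤ) {q s : ℕ} (hq : 0 < q) (hs : 0 < s)
    (h : (a : ℝ) / q ≠ b / s) : 1 / ((q : ℝ) * s) ≤ |(a : ℝ) / q - b / s| := by
  have hq' : (0 : ℝ) < q := by exact_mod_cast hq
  have hs' : (0 : ℝ) < s := by exact_mod_cast hs
  have e : (a : ℝ) / q - b / s = ((a * s - b * q : ℤ) : ℝ) / (q * s) := by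
    push_cast; field_simp
  rw [e, abs_div, abs_of_pos (mul_pos hq' hs')]
  gcongr
  have : a * s - b * q ≠ 0 := by
    intro h0
    apply h
    rw [← sub_eq_zero, e, h0]; simp
  exact_mod_cast Int.one_le_abs this

/-- Left end of the window attached to the rational `v`: with `q = v.den`, the window consists of
the points `v + q^(-τ) - θ q^(-τ²)`, `1 ≤ θ ≤ 2`. -/
noncomputable def winLo (τ : ℕ) (v : ℚ) : ℝ :=
  v + 1 / (v.den : ℝ) ^ τ - 2 / (v.den : ℝ) ^ (τ * τ)

/-- Right end of the window attached to the rational `v`; see `winLo`. -/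
noncomputable def winHi (τ : ℕ) (v : ℚ) : ℝ :=
  v + 1 / (v.den : ℝ) ^ τ - 1 / (v.den : ℝ) ^ (τ * τ)

/-- `w` avoids all fractions `r / s` of intermediate denominator
`v.den^(τ(τ-1)) / 4 ≤ s < w.den`, staying at distance at least `2 s^(-τ)` from them. -/
def Avoids (τ : ℕ) (v w : ℚ) : Prop :=
  ∀ (s : ℕ) (r : ℤ), v.den ^ (τ * (τ - 1)) ≤ 4 * s → s < w.den →
    2 / (s : ℝ) ^ τ ≤ |(w : ℝ) - r / s|

theorem win_near {τ : ℕ} (hτ : 3 ≤ τ) {v : ℚ} (hv : 16 ≤ v.den) {x : ℝ}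
    (hx : x ∈ Icc (winLo τ v) (winHi τ v)) :
    1 / (2 * (v.den : ℝ) ^ τ) ≤ x - v ∧ x - v ≤ 1 / (v.den : ℝ) ^ τ := by
  obtain ⟨h1, h2⟩ := hx
  simp only [winLo, winHi] at h1 h2
  set q : ℝ := (v.den : ℝ) with hq
  have hq16 : (16 : ℝ) ≤ q := by rw [hq]; exact_mod_cast hv
  have hD : 0 < q ^ τ := by positivity
  have hF : 0 < q ^ (τ * τ) := by positivity
  have hDq : q ≤ q ^ τ := le_self_pow₀ (by linarith) (by omega)
  have hDF : q ^ τ * q ^ τ ≤ q ^ (τ * τ) := by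
    rw [← pow_add]
    exact pow_le_pow_right₀ (by linarith) (by nlinarith)
  have h4 : 4 * q ^ τ ≤ q ^ (τ * τ) := by nlinarith
  have h5 : 2 / q ^ (τ * τ) ≤ 2 / (4 * q ^ τ) := by gcongr
  have h6 : 2 / (4 * q ^ τ) = 1 / (2 * q ^ τ) := by field_simp; norm_num
  have h7 : 1 / q ^ τ = 1 / (2 * q ^ τ) + 1 / (2 * q ^ τ) := by field_simp; norm_num
  have h8 : 0 < 1 / q ^ (τ * τ) := by positivity
  constructor <;> linarith

/-- Points of the window of `v` satisfy the required lower bound against every fraction whose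
denominator lies between `v.den` and `v.den^(τ(τ-1)) / 4`. With `q = v.den`, up to `q^(τ-1) / 2` the
fractions are repelled by `v`; beyond that they are repelled by `v + q^(-τ)`, which is a reduced
fraction of denominator `q^τ`. Multiples of these two denominators are treated directly. -/
theorem win_lower {τ : ℕ} (hτ : 3 ≤ τ) {v : ℚ} (hv : 16 ≤ v.den) {x : ℝ}
    (hx : x ∈ Icc (winLo τ v) (winHi τ v)) {C : ℝ} (hC : 2 ≤ C) (s : ℕ) (r : ℤ)
    (hs : v.den ≤ s) (hs4 : 4 * s ≤ v.den ^ (τ * (τ - 1))) :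
    1 / (s : ℝ) ^ τ - C / (s : ℝ) ^ (τ * τ) ≤ |x - r / s| := by
  obtain ⟨hn1, hn2⟩ := win_near hτ hv hx
  obtain ⟨h1, h2⟩ := hx
  simp only [winLo, winHi] at h1 h2
  have hvr : (v : ℝ) = (v.num : ℝ) / v.den := by exact_mod_cast (Rat.num_div_den v).symm
  have hs0 : 0 < s := by omega
  have hsr : (0 : ℝ) < s := by exact_mod_cast hs0
  have hCs : 0 ≤ C / (s : ℝ) ^ (τ * τ) := by positivity
  have hqpos : 0 < v.den := v.den_pos
  have hq16 : (16 : ℝ) ≤ (v.den : ℝ) := by exact_mod_cast hv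
  have hqs : (v.den : ℝ) ≤ s := by exact_mod_cast hs
  have hD : 0 < (v.den : ℝ) ^ τ := by positivity
  have hF : 0 < (v.den : ℝ) ^ (τ * τ) := by positivity
  have hs3 : (s : ℝ) ^ 3 ≤ (s : ℝ) ^ τ := pow_le_pow_right₀ (by linarith) hτ
  by_cases ha : (v : ℝ) = r / s
  · -- The fraction equals `v`, so `s = j * v.den`; only `j = 1` uses the constant `C`.
    rw [← ha, abs_of_nonneg (by have : 0 < 1 / (2 * (v.den : ℝ) ^ τ) := by positivity
                                linarith)]
    have hdvd : v.den ∣ s := by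
      have hv' : v = Rat.divInt r s := by
        rw [Rat.divInt_eq_div]; exact_mod_cast ha
      rw [hv']
      exact_mod_cast Rat.den_dvd r s
    obtain ⟨j, hj⟩ := hdvd
    rcases Nat.lt_or_ge j 2 with hj2 | hj2
    · have : j = 1 := by
        rcases Nat.eq_zero_or_pos j with h0 | h0
        · rw [h0] at hj; omega
        · omega
      rw [this, mul_one] at hj
      rw [hj]
      have : 2 / (v.den : ℝ) ^ (τ * τ) ≤ C / (v.den : ℝ) ^ (τ * τ) := by gcongr
      linarith
    · have h2q : 2 * (v.den : ℝ) ≤ s := by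
        rw [hj]; push_cast
        have : (2 : ℝ) ≤ j := by exact_mod_cast hj2
        nlinarith
      have h3 : 2 * (v.den : ℝ) ^ τ ≤ (s : ℝ) ^ τ := by
        calc 2 * (v.den : ℝ) ^ τ ≤ 2 ^ τ * (v.den : ℝ) ^ τ := by
              gcongr; exact le_self_pow₀ (by norm_num) (by omega)
          _ = (2 * (v.den : ℝ)) ^ τ := (mul_pow _ _ _).symm
          _ ≤ _ := by gcongr
      have : 1 / (s : ℝ) ^ τ ≤ 1 / (2 * (v.den : ℝ) ^ τ) := by gcongr
      linarith
  by_cases hA : 2 * (s : ℝ) ≤ (v.den : ℝ) ^ (τ - 1)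
  · have h3 := inv_mul_le_abs_sub v.num r hqpos hs0 (by rwa [← hvr])
    rw [← hvr] at h3
    have hDA : (v.den : ℝ) ^ τ = v.den * (v.den : ℝ) ^ (τ - 1) := by
      rw [← pow_succ']; congr 1; omega
    have h4 : 1 / (v.den : ℝ) ^ τ ≤ 1 / (2 * ((v.den : ℝ) * s)) := by
      rw [hDA]
      refine one_div_le_one_div_of_le (by positivity) ?_
      nlinarith
    have h5 : 1 / ((v.den : ℝ) * s) = 1 / (2 * ((v.den : ℝ) * s)) + 1 / (2 * ((v.den : ℝ) * s)) := by
      field_simp; norm_num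
    have h6 : 1 / (s : ℝ) ^ τ ≤ 1 / (2 * ((v.den : ℝ) * s)) := by
      gcongr
      refine le_trans ?_ hs3
      have : 2 * (v.den : ℝ) ≤ s ^ 2 := by nlinarith
      nlinarith
    have h7 : |(v : ℝ) - r / s| ≤ |x - r / s| + |x - v| := by
      have := abs_sub_le (v : ℝ) x (r / s); rw [abs_sub_comm (v : ℝ) x] at this; linarith
    have h8 : |x - v| ≤ 1 / (v.den : ℝ) ^ τ := by
      rw [abs_of_nonneg]
      · exact hn2
      · have : 0 < 1 / (2 * (v.den : ℝ) ^ τ) := by positivity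
        linarith
    linarith
  push Not at hA
  -- Compare with `t = v + q^(-τ)`, a reduced fraction of denominator `q^τ`.
  set t : ℝ := v + 1 / (v.den : ℝ) ^ τ with ht
  have hDA : (v.den : ℝ) ^ τ = v.den * (v.den : ℝ) ^ (τ - 1) := by
    rw [← pow_succ']; congr 1; omega
  have htr : t = ((v.num * (v.den : ℤ) ^ (τ - 1) + 1 : ℤ) : ℝ) / ((v.den ^ τ : ℕ) : ℝ) := by
    rw [ht, hvr]; push_cast; rw [hDA]; field_simp
  by_cases hb : t = r / s
  · have hdvd : v.den ^ τ ∣ s := by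
      have e : (v.num * (v.den : ℤ) ^ (τ - 1) + 1) * (s : ℤ) = r * ((v.den ^ τ : ℕ) : ℤ) := by
        rw [htr, div_eq_div_iff (by positivity) (by positivity)] at hb
        exact_mod_cast hb
      have hcop : IsCoprime ((v.den ^ τ : ℕ) : ℤ) (v.num * (v.den : ℤ) ^ (τ - 1) + 1) := by
        push_cast
        apply IsCoprime.pow_left
        have : (v.den : ℤ) ^ (τ - 1) = v.den * (v.den : ℤ) ^ (τ - 2) := by
          rw [← pow_succ']; congr 1; omega
        rw [this]
        exact ⟨-(v.num * (v.den : ℤ) ^ (τ - 2)), 1, by ring⟩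
      have : ((v.den ^ τ : ℕ) : ℤ) ∣ (s : ℤ) := by
        refine hcop.dvd_of_dvd_mul_left ?_
        rw [e]; exact dvd_mul_left _ _
      exact_mod_cast this
    have hle : (v.den : ℝ) ^ τ ≤ s := by exact_mod_cast Nat.le_of_dvd hs0 hdvd
    have h3 : 1 / (s : ℝ) ^ τ ≤ 1 / (v.den : ℝ) ^ (τ * τ) := by
      rw [pow_mul]; gcongr
    rw [← hb, abs_sub_comm]
    have := le_abs_self (t - x)
    linarith
  · have h3 := inv_mul_le_abs_sub (v.num * (v.den : ℤ) ^ (τ - 1) + 1) r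
      (q := v.den ^ τ) (by positivity) hs0 (by rwa [← htr])
    rw [← htr] at h3
    push_cast at h3
    have hs4' : 4 * (s : ℝ) ≤ (v.den : ℝ) ^ (τ * (τ - 1)) := by exact_mod_cast hs4
    have hFD : (v.den : ℝ) ^ (τ * τ) = (v.den : ℝ) ^ τ * (v.den : ℝ) ^ (τ * (τ - 1)) := by
      rw [← pow_add]; congr 1
      obtain ⟨n, rfl⟩ := Nat.exists_eq_add_of_le hτ
      simp only [show 3 + n - 1 = 2 + n by omega]; ring
    have h4 : 2 / (v.den : ℝ) ^ (τ * τ) ≤ 1 / (2 * ((v.den : ℝ) ^ τ * s)) := by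
      rw [hFD, div_le_div_iff₀ (by positivity) (by positivity)]
      nlinarith
    have h5 : 1 / ((v.den : ℝ) ^ τ * s) =
        1 / (2 * ((v.den : ℝ) ^ τ * s)) + 1 / (2 * ((v.den : ℝ) ^ τ * s)) := by
      field_simp; norm_num
    have hA2 : 16 * (v.den : ℝ) ≤ (v.den : ℝ) ^ (τ - 1) := by
      calc 16 * (v.den : ℝ) ≤ (v.den : ℝ) ^ 2 := by nlinarith
        _ ≤ _ := pow_le_pow_right₀ (by linarith) (by omega)
    have h6 : 1 / (s : ℝ) ^ τ ≤ 1 / (2 * ((v.den : ℝ) ^ τ * s)) := by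
      gcongr
      refine le_trans ?_ hs3
      rw [hDA]
      have : 2 * ((v.den : ℝ) * (v.den : ℝ) ^ (τ - 1)) ≤ s ^ 2 := by
        generalize (v.den : ℝ) ^ (τ - 1) = A at *
        nlinarith
      nlinarith
    have h7 : |t - r / s| ≤ |x - r / s| + |t - x| := by
      have := abs_sub_le t x (r / s); linarith
    have h8 : |t - x| ≤ 2 / (v.den : ℝ) ^ (τ * τ) := by
      rw [abs_of_nonneg]
      · linarith
      · have : 0 < 1 / (v.den : ℝ) ^ (τ * τ) := by positivity
        linarith
    linarith

/-- A point lying in the windows of a sequence of rationals, each avoiding the intermediate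
fractions of its predecessor, belongs to `E(Ψ, ω)`. -/
theorem mem_ESet_of_chain {τ : ℕ} (hτ : 3 ≤ τ) {C : ℝ} (hC : 2 ≤ C) {x : ℝ} (v : ℕ → ℚ)
    (hv : ∀ k, 16 ≤ (v k).den) (hlt : ∀ k, (v k).den < (v (k + 1)).den)
    (hav : ∀ k, Avoids τ (v k) (v (k + 1)))
    (hx : ∀ k, x ∈ Icc (winLo τ (v k)) (winHi τ (v k))) :
    x ∈ ESet (fun q : ℝ => q ^ (-(τ : ℝ)))
        (fun q : ℝ => C * q ^ (-((τ : ℝ) * ((τ : ℝ) - 1)))) := by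
  have hmono : StrictMono fun k => (v k).den := strictMono_nat_of_lt_succ hlt
  have habs : ∀ k, |x - v k| ≤ 1 / ((v k).den : ℝ) ^ τ := by
    intro k
    obtain ⟨h1, h2⟩ := win_near hτ (hv k) (hx k)
    have : 0 ≤ 1 / (2 * ((v k).den : ℝ) ^ τ) := by positivity
    rw [abs_of_nonneg (by linarith)]
    exact h2
  refine ⟨?_, (v 0).den, ?_⟩
  · refine Set.infinite_of_injective_forall_mem (f := fun k => ((v k).num, (v k).den)) ?_ ?_
    · intro a b hab
      exact hmono.injective (congrArg Prod.snd hab)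
    · intro k
      refine ⟨(v k).den_pos, ?_⟩
      simp only [Psi_eq]
      have : ((v k : ℚ) : ℝ) = ((v k).num : ℝ) / (v k).den := by
        exact_mod_cast (Rat.num_div_den (v k)).symm
      rw [← this]
      exact habs k
  · intro s hs r
    have hs0 : 0 < s := lt_of_lt_of_le (v 0).den_pos hs
    have hsr : (0 : ℝ) < s := by exact_mod_cast hs0
    simp only [omega_Psi_eq τ s hτ hs0 C]
    obtain ⟨k, hk1, hk2⟩ : ∃ k, (v k).den ≤ s ∧ s < (v (k + 1)).den := by
      have hex : ∃ n, s < (v n).den := ⟨s + 1, lt_of_lt_of_le (Nat.lt_succ_self s) (hmono.id_le (s + 1))⟩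
      classical
      have h1 := Nat.find_spec hex
      have h0 : Nat.find hex ≠ 0 := by
        intro h; rw [h] at h1; omega
      obtain ⟨k, hk⟩ := Nat.exists_eq_succ_of_ne_zero h0
      refine ⟨k, ?_, by rw [hk] at h1; exact h1⟩
      have := Nat.find_min hex (m := k) (by omega)
      omega
    by_cases h4 : 4 * s ≤ (v k).den ^ (τ * (τ - 1))
    · exact win_lower hτ (hv k) (hx k) hC s r hk1 h4
    · have h5 := hav k s r (by omega) hk2
      have h6 := habs (k + 1)
      have h7 : 1 / ((v (k + 1)).den : ℝ) ^ τ ≤ 1 / (s : ℝ) ^ τ := by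
        have : (s : ℝ) ≤ ((v (k + 1)).den : ℝ) := by exact_mod_cast hk2.le
        gcongr
      have h8 := abs_sub_le (v (k + 1) : ℝ) x (r / s)
      rw [abs_sub_comm (v (k + 1) : ℝ) x] at h8
      have h9 : 0 ≤ C / (s : ℝ) ^ (τ * τ) := by positivity
      have h10 : 2 / (s : ℝ) ^ τ = 1 / (s : ℝ) ^ τ + 1 / (s : ℝ) ^ τ := by ring
      linarith

/-! ### Measure of the points far from fractions -/

open MeasureTheory in
/-- At most `s (b - a) + 2 s ρ + 1` of the `ρ`-balls around the fractions `r / s` meet `[a, b]`. -/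
theorem volume_near_fractions_le {a b : ℝ} (hab : a ≤ b) {s : ℕ} (hs : 0 < s) {ρ : ℝ} (hρ : 0 ≤ ρ) :
    volume (Icc a b ∩ ⋃ r : ℤ, Metric.closedBall ((r : ℝ) / s) ρ) ≤
      ENNReal.ofReal ((s * (b - a) + 2 * (s * ρ) + 1) * (2 * ρ)) := by
  have hs' : (0 : ℝ) < s := by exact_mod_cast hs
  set F : Finset ℤ := Finset.Icc ⌈s * (a - ρ)⌉ ⌊s * (b + ρ)⌋ with hF
  have hsub : Icc a b ∩ ⋃ r : ℤ, Metric.closedBall ((r : ℝ) / s) ρ ⊆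
      ⋃ r ∈ F, Metric.closedBall ((r : ℝ) / s) ρ := by
    rintro y ⟨⟨h1, h2⟩, h3⟩
    obtain ⟨r, hr⟩ := mem_iUnion.1 h3
    refine mem_iUnion₂.2 ⟨r, ?_, hr⟩
    rw [Metric.mem_closedBall, Real.dist_eq, abs_le] at hr
    rw [hF, Finset.mem_Icc, Int.ceil_le, Int.le_floor]
    have e : (r : ℝ) = s * (r / s) := by field_simp
    constructor
    · rw [e]; gcongr; linarith
    · rw [e]; gcongr; linarith
  have hcard : (F.card : ℝ) ≤ s * (b - a) + 2 * (s * ρ) + 1 := by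
    rw [hF, Int.card_Icc]
    have h0 : 0 ≤ s * (b - a) := mul_nonneg hs'.le (by linarith)
    have h0' : 0 ≤ s * ρ := by positivity
    rcases le_or_gt 0 (⌊s * (b + ρ)⌋ + 1 - ⌈s * (a - ρ)⌉) with h | h
    · have : (((⌊s * (b + ρ)⌋ + 1 - ⌈s * (a - ρ)⌉).toNat : ℤ) : ℝ) =
          ((⌊s * (b + ρ)⌋ + 1 - ⌈s * (a - ρ)⌉ : ℤ) : ℝ) := by rw [Int.toNat_of_nonneg h]
      rw [Int.cast_natCast] at this
      rw [this]
      push_cast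
      have h1 := Int.floor_le (s * (b + ρ))
      have h2 := Int.le_ceil (s * (a - ρ))
      linarith
    · rw [Int.toNat_of_nonpos h.le]
      push_cast
      linarith
  calc volume (Icc a b ∩ ⋃ r : ℤ, Metric.closedBall ((r : ℝ) / s) ρ)
      ≤ volume (⋃ r ∈ F, Metric.closedBall ((r : ℝ) / s) ρ) := measure_mono hsub
    _ ≤ ∑ r ∈ F, volume (Metric.closedBall ((r : ℝ) / s) ρ) := measure_biUnion_finset_le _ _
    _ = ENNReal.ofReal (F.card * (2 * ρ)) := by
        simp only [Real.volume_closedBall, Finset.sum_const, nsmul_eq_mul]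
        rw [ENNReal.ofReal_mul (Nat.cast_nonneg F.card), ENNReal.ofReal_natCast]
    _ ≤ _ := by
        apply ENNReal.ofReal_le_ofReal
        gcongr

theorem finite_rat_bounded (N : ℕ) (c d : ℝ) :
    {w : ℚ | w.den ≤ N ∧ (w : ℝ) ∈ Icc c d}.Finite := by
  obtain ⟨K, hK⟩ := exists_nat_ge (N * (|c| + |d|))
  refine Set.Finite.subset
    ((Finset.Icc (-(K : ℤ)) K ×ˢ Finset.range (N + 1)).finite_toSet.image
      (fun z : ℤ × ℕ => (z.1 : ℚ) / z.2)) ?_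
  rintro w ⟨h1, h2, h3⟩
  refine ⟨(w.num, w.den), ?_, Rat.num_div_den w⟩
  have hd : (0 : ℝ) < w.den := by exact_mod_cast w.den_pos
  have hw : (w : ℝ) = (w.num : ℝ) / w.den := by exact_mod_cast (Rat.num_div_den w).symm
  have hnum : (w.num : ℝ) = w * w.den := by rw [hw]; field_simp
  have habs : |(w : ℝ)| ≤ |c| + |d| := by
    rw [abs_le]
    constructor
    · linarith [neg_abs_le c, abs_nonneg d]
    · linarith [le_abs_self d, abs_nonneg c]
  have hN : (w.den : ℝ) ≤ N := by exact_mod_cast h1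
  have : |(w.num : ℝ)| ≤ K := by
    rw [hnum, abs_mul, abs_of_pos hd]
    refine le_trans ?_ hK
    rw [mul_comm]
    gcongr
  rw [abs_le] at this
  simp only [Finset.coe_product, Finset.coe_Icc, Finset.coe_range, mem_prod, mem_Icc, mem_Iio]
  refine ⟨⟨by exact_mod_cast this.1, by exact_mod_cast this.2⟩, by omega⟩

open MeasureTheory in
/-- The points of `[a + L/4, a + 3 L / 4]` that stay `3 s^(-τ)`-far from all fractions of denominator
`S ≤ s ≤ N`, and `1/(sN)`-far from all fractions of denominator `s ≤ N/16`, fill at least half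
of the interval. -/
theorem volume_good_ge {τ : ℕ} (hτ : 3 ≤ τ) {a L : ℝ} (hL : 0 < L) {S N : ℕ} (hS : 96 ≤ S)
    (hLS : 1344 ≤ L * (S : ℝ) ^ (τ - 1)) (hN : 0 < N)
    (hH : (N : ℝ)⁻¹ * ∑ i ∈ Finset.range N, 1 / ((i : ℝ) + 1) ≤ L / 96) :
    ENNReal.ofReal (L / 4) ≤ volume (Icc (a + L / 4) (a + 3 * L / 4) \
      ((⋃ s ∈ Finset.Ioo (S - 1) (N + 1), ⋃ r : ℤ, Metric.closedBall ((r : ℝ) / (s : ℕ))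
          (3 / (s : ℝ) ^ τ)) ∪
        ⋃ i ∈ Finset.range (N / 16), ⋃ r : ℤ, Metric.closedBall ((r : ℝ) / ((i + 1 : ℕ) : ℝ))
          (1 / (((i + 1 : ℕ) : ℝ) * N)))) := by
  have hN' : (0 : ℝ) < N := by exact_mod_cast hN
  set J := Icc (a + L / 4) (a + 3 * L / 4) with hJ
  have hJle : a + L / 4 ≤ a + 3 * L / 4 := by linarith
  have hJlen : a + 3 * L / 4 - (a + L / 4) = L / 2 := by ring
  set U₁ := ⋃ s ∈ Finset.Ioo (S - 1) (N + 1), ⋃ r : ℤ, Metric.closedBall ((r : ℝ) / (s : ℕ))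
          (3 / (s : ℝ) ^ τ) with hU₁
  set U₂ := ⋃ i ∈ Finset.range (N / 16), ⋃ r : ℤ, Metric.closedBall ((r : ℝ) / ((i + 1 : ℕ) : ℝ))
          (1 / (((i + 1 : ℕ) : ℝ) * N)) with hU₂
  have hSr : (96 : ℝ) ≤ S := by exact_mod_cast hS
  have b1 : volume (J ∩ U₁) ≤ ENNReal.ofReal (L / 8) := by
    calc volume (J ∩ U₁) ≤ ∑ s ∈ Finset.Ioo (S - 1) (N + 1),
          volume (J ∩ ⋃ r : ℤ, Metric.closedBall ((r : ℝ) / (s : ℕ)) (3 / (s : ℝ) ^ τ)) := by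
          rw [hU₁, inter_iUnion₂]
          exact measure_biUnion_finset_le _ _
      _ ≤ ∑ s ∈ Finset.Ioo (S - 1) (N + 1),
          ENNReal.ofReal ((3 * L + 42 / (S : ℝ) ^ (τ - 2)) * ((s : ℝ) ^ 2)⁻¹) := by
          refine Finset.sum_le_sum fun s hs => ?_
          rw [Finset.mem_Ioo] at hs
          have hs0 : 0 < s := by omega
          have hsS : (S : ℝ) ≤ s := by exact_mod_cast (by omega : S ≤ s)
          have hs1 : (1 : ℝ) ≤ s := by linarith
          refine (volume_near_fractions_le hJle hs0 (by positivity)).trans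
            (ENNReal.ofReal_le_ofReal ?_)
          rw [hJlen]
          have e1 : (s : ℝ) ^ τ = s ^ 2 * s ^ (τ - 2) := by rw [← pow_add]; congr 1; omega
          have e2 : (S : ℝ) ^ (τ - 2) ≤ (s : ℝ) ^ (τ - 2) := by gcongr
          have e3 : (s : ℝ) ≤ (s : ℝ) ^ (τ - 2) := le_self_pow₀ hs1 (by omega)
          have e4 : (s : ℝ) ≤ (s : ℝ) ^ τ := le_self_pow₀ hs1 (by omega)
          have f1 : (s : ℝ) * (3 / s ^ τ) ≤ 3 := by
            rw [← mul_div_assoc, div_le_iff₀ (by positivity)]; nlinarith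
          have f2 : 3 / (s : ℝ) ^ τ * s ≤ 3 * ((s : ℝ) ^ 2)⁻¹ := by
            rw [e1, div_mul_eq_mul_div, div_le_iff₀ (by positivity)]
            have : 3 * ((s : ℝ) ^ 2)⁻¹ * (s ^ 2 * s ^ (τ - 2)) = 3 * (s : ℝ) ^ (τ - 2) := by
              field_simp
            rw [this]; linarith
          have f3 : 3 / (s : ℝ) ^ τ ≤ 3 / (S : ℝ) ^ (τ - 2) * ((s : ℝ) ^ 2)⁻¹ := by
            rw [← div_eq_mul_inv, div_div]
            refine div_le_div_of_nonneg_left (by norm_num) (by positivity) ?_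
            rw [e1, mul_comm]
            gcongr
          have f4 : 0 ≤ 3 / (s : ℝ) ^ τ := by positivity
          have f5 : (42 / (S : ℝ) ^ (τ - 2)) * ((s : ℝ) ^ 2)⁻¹ =
            14 * (3 / (S : ℝ) ^ (τ - 2) * ((s : ℝ) ^ 2)⁻¹) := by ring
          rw [add_mul (3 * L), f5]
          generalize 3 / (s : ℝ) ^ τ = ρ at *
          nlinarith [mul_le_mul_of_nonneg_left f2 hL.le, mul_le_mul_of_nonneg_right f1 f4]
      _ = ENNReal.ofReal (∑ s ∈ Finset.Ioo (S - 1) (N + 1),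
          (3 * L + 42 / (S : ℝ) ^ (τ - 2)) * ((s : ℝ) ^ 2)⁻¹) := by
          rw [ENNReal.ofReal_sum_of_nonneg]
          intros; positivity
      _ ≤ _ := by
          apply ENNReal.ofReal_le_ofReal
          rw [← Finset.mul_sum]
          have h1 := sum_Ioo_inv_sq_le (α := ℝ) (S - 1) (N + 1)
          have h2 : ((S - 1 : ℕ) : ℝ) + 1 = S := by
            rw [Nat.cast_sub (by omega)]; simp
          rw [h2] at h1
          have h3 : 42 / (S : ℝ) ^ (τ - 2) * (2 / S) ≤ L / 16 := by
            have : (S : ℝ) ^ (τ - 1) = S ^ (τ - 2) * S := by rw [← pow_succ]; congr 1; omega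
            rw [div_mul_div_comm, ← this, div_le_iff₀ (by positivity)]
            linarith
          have h4 : 3 * L * (2 / S) ≤ L / 16 := by
            rw [← mul_div_assoc, div_le_iff₀ (by positivity)]
            nlinarith
          calc _ ≤ (3 * L + 42 / (S : ℝ) ^ (τ - 2)) * (2 / S) := by gcongr
            _ ≤ _ := by rw [add_mul]; linarith
  have b2 : volume (J ∩ U₂) ≤ ENNReal.ofReal (L / 8) := by
    calc volume (J ∩ U₂) ≤ ∑ i ∈ Finset.range (N / 16),
          volume (J ∩ ⋃ r : ℤ, Metric.closedBall ((r : ℝ) / ((i + 1 : ℕ) : ℝ))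
            (1 / (((i + 1 : ℕ) : ℝ) * N))) := by
          rw [hU₂, inter_iUnion₂]
          exact measure_biUnion_finset_le _ _
      _ ≤ ∑ i ∈ Finset.range (N / 16),
          ENNReal.ofReal (L / N + 6 * ((N : ℝ)⁻¹ * (1 / ((i : ℝ) + 1)))) := by
          refine Finset.sum_le_sum fun i hi => ?_
          refine (volume_near_fractions_le hJle (Nat.succ_pos i) (by positivity)).trans
            (ENNReal.ofReal_le_ofReal ?_)
          rw [hJlen]
          push_cast
          have hi' : (0 : ℝ) < (i : ℝ) + 1 := by positivity
          have hN1 : (N : ℝ)⁻¹ ≤ 1 := inv_le_one_of_one_le₀ (by exact_mod_cast hN)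
          have e1 : ((i : ℝ) + 1) * (1 / (((i : ℝ) + 1) * N)) = (N : ℝ)⁻¹ := by field_simp
          have e2 : (1 / (((i : ℝ) + 1) * N)) = (N : ℝ)⁻¹ * (1 / ((i : ℝ) + 1)) := by field_simp
          rw [e1, e2]
          have e3 : ((i : ℝ) + 1) * (L / 2) * (2 * ((N : ℝ)⁻¹ * (1 / ((i : ℝ) + 1)))) = L / N := by
            field_simp
          rw [add_assoc, add_mul, e3]
          have : 0 ≤ (N : ℝ)⁻¹ * (1 / ((i : ℝ) + 1)) := by positivity
          nlinarith
      _ = ENNReal.ofReal (∑ i ∈ Finset.range (N / 16),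
          (L / N + 6 * ((N : ℝ)⁻¹ * (1 / ((i : ℝ) + 1))))) := by
          rw [ENNReal.ofReal_sum_of_nonneg]
          intros; positivity
      _ ≤ _ := by
          apply ENNReal.ofReal_le_ofReal
          rw [Finset.sum_add_distrib, ← Finset.mul_sum, ← Finset.mul_sum, Finset.sum_const,
            Finset.card_range, nsmul_eq_mul]
          have h1 : ∑ i ∈ Finset.range (N / 16), 1 / ((i : ℝ) + 1) ≤
              ∑ i ∈ Finset.range N, 1 / ((i : ℝ) + 1) := by
            refine Finset.sum_le_sum_of_subset_of_nonneg
              (Finset.range_mono (Nat.div_le_self _ _)) ?_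
            intros; positivity
          have h2 : (N : ℝ)⁻¹ * ∑ i ∈ Finset.range (N / 16), 1 / ((i : ℝ) + 1) ≤ L / 96 :=
            le_trans (by gcongr) hH
          have h3 : ((N / 16 : ℕ) : ℝ) ≤ N / 16 := by exact_mod_cast Nat.cast_div_le (α := ℝ)
          have h4 : ((N / 16 : ℕ) : ℝ) * (L / N) ≤ L / 16 := by
            calc _ ≤ (N : ℝ) / 16 * (L / N) := by gcongr
              _ = _ := by field_simp
          linarith
  have hJv : volume J = ENNReal.ofReal (L / 2) := by rw [hJ, Real.volume_Icc, hJlen]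
  have hle : volume J ≤ volume (J \ (U₁ ∪ U₂)) + (volume (J ∩ U₁) + volume (J ∩ U₂)) := by
    refine le_trans (measure_mono ?_) ((measure_union_le _ _).trans
      (add_le_add le_rfl (measure_union_le _ _)))
    intro y hy
    by_cases h1 : y ∈ U₁
    · exact Or.inr (Or.inl ⟨hy, h1⟩)
    · by_cases h2 : y ∈ U₂
      · exact Or.inr (Or.inr ⟨hy, h2⟩)
      · exact Or.inl ⟨hy, fun h => h.elim h1 h2⟩
  have hsum : volume (J ∩ U₁) + volume (J ∩ U₂) ≤ ENNReal.ofReal (L / 4) := by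
    refine (add_le_add b1 b2).trans ?_
    rw [← ENNReal.ofReal_add (by positivity) (by positivity)]
    exact ENNReal.ofReal_le_ofReal (by linarith)
  have h2 : ENNReal.ofReal (L / 4) + ENNReal.ofReal (L / 4) ≤
      volume (J \ (U₁ ∪ U₂)) + ENNReal.ofReal (L / 4) := by
    rw [← ENNReal.ofReal_add (by positivity) (by positivity)]
    calc ENNReal.ofReal (L / 4 + L / 4) = volume J := by rw [hJv]; congr 1; ring
      _ ≤ _ := hle.trans (add_le_add le_rfl hsum)
  exact (ENNReal.add_le_add_iff_right ENNReal.ofReal_ne_top).1 h2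

/-! ### Construction of the Cantor set -/

theorem rat_sep {w w' : ℚ} {N : ℕ} (h : w.den ≤ N) (h' : w'.den ≤ N) (hlt : w < w') :
    1 / (N : ℝ) ^ 2 ≤ (w' : ℝ) - w := by
  have e : ∀ z : ℚ, (z : ℝ) = (z.num : ℝ) / z.den := fun z => by
    exact_mod_cast (Rat.num_div_den z).symm
  have hlt' : (w : ℝ) < w' := by exact_mod_cast hlt
  have h1 := inv_mul_le_abs_sub w'.num w.num w'.den_pos w.den_pos
    (by rw [← e, ← e]; exact hlt'.ne')
  rw [← e, ← e, abs_of_pos (by linarith)] at h1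
  refine le_trans ?_ h1
  have a1 : (0 : ℝ) < w.den := by exact_mod_cast w.den_pos
  have a2 : (0 : ℝ) < w'.den := by exact_mod_cast w'.den_pos
  have a3 : (w.den : ℝ) ≤ N := by exact_mod_cast h
  have a4 : (w'.den : ℝ) ≤ N := by exact_mod_cast h'
  rw [sq]
  gcongr

/-- The `i`-th smallest element of a finite set of rationals (and `v` beyond the last one). -/
noncomputable def nth (R : Finset ℚ) (v : ℚ) (i : ℕ) : ℚ :=
  if h : i < R.card then R.orderEmbOfFin rfl ⟨i, h⟩ else v

theorem nth_mem {R : Finset ℚ} {v : ℚ} {i : ℕ} (h : i < R.card) : nth R v i ∈ R := by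
  rw [nth, dif_pos h]
  exact R.orderEmbOfFin_mem rfl _

theorem nth_sep {R : Finset ℚ} {v : ℚ} {N : ℕ} (hR : ∀ w ∈ R, w.den ≤ N) {i j : ℕ} (hij : i ≤ j)
    (hj : j < R.card) : ((j : ℝ) - i) / (N : ℝ) ^ 2 ≤ (nth R v j : ℝ) - nth R v i := by
  induction j, hij using Nat.le_induction with
  | base => simp
  | succ j hij ih =>
    have h1 := ih (by omega)
    have h2 : nth R v j < nth R v (j + 1) := by
      rw [nth, nth, dif_pos (by omega), dif_pos hj]
      exact (R.orderEmbOfFin rfl).strictMono (by simp [Fin.lt_def])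
    have h3 := rat_sep (hR _ (nth_mem (v := v) (by omega))) (hR _ (nth_mem hj)) h2
    have : (((j + 1 : ℕ) : ℝ) - i) / (N : ℝ) ^ 2 = ((j : ℝ) - i) / (N : ℝ) ^ 2 + 1 / (N : ℝ) ^ 2 := by
      push_cast; ring
    linarith

/-- A rational close to a point that avoids the intermediate fractions avoids them too: for small
`s` by the triangle inequality, for large `s` because distinct fractions repel. -/
theorem avoids_of_near {τ : ℕ} (hτ : 3 ≤ τ) {v w : ℚ} {N : ℕ} (hN : 2048 ≤ N) (hw : w.den ≤ N)
    {y : ℝ} (hy : |y - w| ≤ 16 / (N : ℝ) ^ 2)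
    (hav : ∀ (s : ℕ) (r : ℤ), v.den ^ (τ * (τ - 1)) ≤ 4 * s → s ≤ N →
      3 / (s : ℝ) ^ τ < |y - r / s|) : Avoids τ v w := by
  intro s r hs hsw
  have hs0 : 0 < s := by
    have : 0 < v.den ^ (τ * (τ - 1)) := by positivity
    omega
  have hs' : (1 : ℝ) ≤ s := by exact_mod_cast hs0
  have hNr : (2048 : ℝ) ≤ N := by exact_mod_cast hN
  have hpow : (s : ℝ) ^ τ = s ^ (τ - 1) * s := by rw [← pow_succ]; congr 1; omega
  have hwr : (w : ℝ) = (w.num : ℝ) / w.den := by exact_mod_cast (Rat.num_div_den w).symm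
  by_cases h : 2 * (N : ℝ) ≤ (s : ℝ) ^ (τ - 1)
  · have hne : (w : ℝ) ≠ r / s := by
      intro he
      have hv' : w = Rat.divInt r s := by
        rw [Rat.divInt_eq_div]; exact_mod_cast he
      have : (w.den : ℤ) ∣ s := by rw [hv']; exact Rat.den_dvd r s
      have := Nat.le_of_dvd hs0 (by exact_mod_cast this)
      omega
    have h1 := inv_mul_le_abs_sub w.num r w.den_pos hs0 (by rwa [← hwr])
    rw [← hwr] at h1
    refine le_trans ?_ h1
    have hd : (0 : ℝ) < w.den := by exact_mod_cast w.den_pos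
    have hdN : (w.den : ℝ) ≤ N := by exact_mod_cast hw
    rw [hpow, div_le_div_iff₀ (by positivity) (by positivity)]
    nlinarith
  · push Not at h
    have h1 := hav s r hs (by omega)
    have hss : (s : ℝ) ^ 2 ≤ (s : ℝ) ^ (τ - 1) := pow_le_pow_right₀ hs' (by omega)
    have h2 : 16 * (s : ℝ) ^ τ ≤ N ^ 2 := by
      refine le_of_sq_le_sq ?_ (by positivity)
      rw [hpow]
      generalize (s : ℝ) ^ (τ - 1) = A at *
      have hA0 : 0 ≤ A := le_trans (by positivity) hss
      have h3 : A ^ 2 ≤ (2 * N : ℝ) ^ 2 := by gcongr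
      calc (16 * (A * s)) ^ 2 = 256 * (A ^ 2 * (s : ℝ) ^ 2) := by ring
        _ ≤ 256 * ((2 * N : ℝ) ^ 2 * (2 * N)) := by gcongr; linarith
        _ = 2048 * (N : ℝ) ^ 3 := by ring
        _ ≤ N * (N : ℝ) ^ 3 := by gcongr
        _ = ((N : ℝ) ^ 2) ^ 2 := by ring
    have h3 : 16 / (N : ℝ) ^ 2 ≤ 1 / (s : ℝ) ^ τ := by
      rw [div_le_div_iff₀ (by positivity) (by positivity)]; linarith
    have h4 := abs_sub_le y w (r / s)
    have h5 : 3 / (s : ℝ) ^ τ = 2 / (s : ℝ) ^ τ + 1 / (s : ℝ) ^ τ := by ring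
    linarith

/-- Inside an interval of length `L`, the length of the window of `v`, there are at least
`L N² / 128` rationals avoiding the intermediate fractions of `v` and having denominator in
`(N / 16, N]`. By Dirichlet's theorem each point of the set measured in `volume_good_ge` is within
`1 / (s N)` of a fraction of denominator `s ≤ N`; as `s ≤ N / 16` is excluded there, these fractions
are `16 / N²`-dense in a set of measure at least `L / 4`. -/
theorem exists_many {τ : ℕ} (hτ : 3 ≤ τ) {v : ℚ} (hv : 1344 ≤ v.den) {N : ℕ} (hN : 8192 ≤ N)
    {L : ℝ} (hL : L = 1 / (v.den : ℝ) ^ (τ * τ)) (a : ℝ)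
    (hH : (N : ℝ)⁻¹ * ∑ i ∈ Finset.range N, 1 / ((i : ℝ) + 1) ≤ L / 96) :
    ∃ R : Finset ℚ, (∀ w ∈ R, w.den ≤ N ∧ N < 16 * w.den ∧ Avoids τ v w ∧
      a + L / 4 - 16 / (N : ℝ) ^ 2 ≤ w ∧ (w : ℝ) ≤ a + 3 * L / 4 + 16 / (N : ℝ) ^ 2) ∧
      L * (N : ℝ) ^ 2 / 128 ≤ R.card := by
  have hq : (1344 : ℝ) ≤ v.den := by exact_mod_cast hv
  have hL0 : 0 < L := by rw [hL]; positivity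
  have hNr : (8192 : ℝ) ≤ N := by exact_mod_cast hN
  set S : ℕ := (v.den ^ (τ * (τ - 1)) + 3) / 4 with hS
  have hSiff : ∀ s : ℕ, v.den ^ (τ * (τ - 1)) ≤ 4 * s ↔ S ≤ s := fun s => by omega
  have hS4 : (v.den : ℝ) ^ (τ * (τ - 1)) ≤ 4 * S := by exact_mod_cast (hSiff S).2 le_rfl
  have hD : (v.den : ℝ) * 1344 ≤ (v.den : ℝ) ^ (τ * (τ - 1)) := by
    calc (v.den : ℝ) * 1344 ≤ (v.den : ℝ) ^ 2 := by nlinarith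
      _ ≤ _ := pow_le_pow_right₀ (by linarith) (by
        have : 2 ≤ τ - 1 := by omega
        nlinarith)
  have hS96 : 96 ≤ S := by
    have : (96 : ℝ) ≤ S := by linarith
    exact_mod_cast this
  have hLS : 1344 ≤ L * (S : ℝ) ^ (τ - 1) := by
    rw [hL, div_mul_eq_mul_div, one_mul, le_div_iff₀ (by positivity)]
    have h4 : (0 : ℝ) < 4 ^ (τ - 1) := by positivity
    refine le_of_mul_le_mul_right ?_ h4
    rw [← mul_pow, mul_comm (S : ℝ) 4]
    have hexp : τ * τ + τ ≤ τ * (τ - 1) * (τ - 1) := by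
      obtain ⟨n, rfl⟩ := Nat.exists_eq_add_of_le hτ
      simp only [show 3 + n - 1 = 2 + n by omega]
      nlinarith
    calc 1344 * (v.den : ℝ) ^ (τ * τ) * 4 ^ (τ - 1)
        ≤ v.den * (v.den : ℝ) ^ (τ * τ) * (v.den : ℝ) ^ (τ - 1) := by gcongr; linarith
      _ = (v.den : ℝ) ^ (τ * τ + τ) := by
          rw [← pow_succ', ← pow_add]; congr 1; omega
      _ ≤ (v.den : ℝ) ^ (τ * (τ - 1) * (τ - 1)) := pow_le_pow_right₀ (by linarith) hexp
      _ = ((v.den : ℝ) ^ (τ * (τ - 1))) ^ (τ - 1) := pow_mul _ _ _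
      _ ≤ _ := by gcongr
  have hvol := volume_good_ge hτ (a := a) hL0 hS96 hLS (by omega) hH
  set Y := Icc (a + L / 4) (a + 3 * L / 4) \
      ((⋃ s ∈ Finset.Ioo (S - 1) (N + 1), ⋃ r : ℤ, Metric.closedBall ((r : ℝ) / (s : ℕ))
          (3 / (s : ℝ) ^ τ)) ∪
        ⋃ i ∈ Finset.range (N / 16), ⋃ r : ℤ, Metric.closedBall ((r : ℝ) / ((i + 1 : ℕ) : ℝ))
          (1 / (((i + 1 : ℕ) : ℝ) * N))) with hY
  have hfin : {w : ℚ | w.den ≤ N ∧ N < 16 * w.den ∧ Avoids τ v w ∧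
      a + L / 4 - 16 / (N : ℝ) ^ 2 ≤ w ∧ (w : ℝ) ≤ a + 3 * L / 4 + 16 / (N : ℝ) ^ 2}.Finite :=
    (finite_rat_bounded N (a + L / 4 - 16 / (N : ℝ) ^ 2)
      (a + 3 * L / 4 + 16 / (N : ℝ) ^ 2)).subset fun w hw => ⟨hw.1, hw.2.2.2⟩
  refine ⟨hfin.toFinset, fun w hw => by simpa using hw, ?_⟩
  have hcov : Y ⊆ ⋃ w ∈ hfin.toFinset, Metric.closedBall (w : ℝ) (16 / (N : ℝ) ^ 2) := by
    rintro y ⟨⟨hy1, hy2⟩, hy3⟩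
    rw [mem_union, not_or] at hy3
    obtain ⟨hy3, hy4⟩ := hy3
    simp only [mem_iUnion, not_exists, Metric.mem_closedBall, Real.dist_eq, not_le,
      Finset.mem_Ioo, Finset.mem_range] at hy3 hy4
    obtain ⟨w, hw1, hw2⟩ := Real.exists_rat_abs_sub_le_and_den_le y (by omega : 0 < N)
    have hd : (0 : ℝ) < w.den := by exact_mod_cast w.den_pos
    have hw3 : |y - w| ≤ 1 / ((w.den : ℝ) * N) := by
      refine hw1.trans ?_
      refine one_div_le_one_div_of_le (by positivity) ?_
      nlinarith
    have hw4 : N < 16 * w.den := by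
      by_contra hcon
      have h5 := hy4 (w.den - 1) (by have := w.den_pos; omega) w.num
      rw [Nat.sub_add_cancel w.den_pos] at h5
      have hwr : (w : ℝ) = (w.num : ℝ) / w.den := by exact_mod_cast (Rat.num_div_den w).symm
      rw [← hwr] at h5
      linarith
    have hw5 : |y - w| ≤ 16 / (N : ℝ) ^ 2 := by
      refine hw3.trans ?_
      have : (N : ℝ) < 16 * w.den := by exact_mod_cast hw4
      rw [div_le_div_iff₀ (by positivity) (by positivity)]
      nlinarith
    have hav : Avoids τ v w := by
      refine avoids_of_near hτ (by omega) hw2 hw5 fun s r hs hsN => ?_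
      exact hy3 s ⟨by have := (hSiff s).1 hs; omega, by omega⟩ r
    have hab := abs_le.1 hw5
    refine mem_iUnion₂.2 ⟨w, ?_, ?_⟩
    · rw [Set.Finite.mem_toFinset]
      exact ⟨hw2, hw4, hav, by linarith, by linarith⟩
    · rwa [Metric.mem_closedBall, Real.dist_eq]
  have h1 : ENNReal.ofReal (L / 4) ≤
      ENNReal.ofReal (hfin.toFinset.card * (2 * (16 / (N : ℝ) ^ 2))) := by
    refine hvol.trans ((MeasureTheory.measure_mono hcov).trans
      ((MeasureTheory.measure_biUnion_finset_le _ _).trans_eq ?_))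
    simp only [Real.volume_closedBall, Finset.sum_const, nsmul_eq_mul]
    rw [ENNReal.ofReal_mul (Nat.cast_nonneg _), ENNReal.ofReal_natCast]
  rw [ENNReal.ofReal_le_ofReal_iff (by positivity)] at h1
  have h2 : (hfin.toFinset.card : ℝ) * (2 * (16 / (N : ℝ) ^ 2)) * (N : ℝ) ^ 2 =
      32 * hfin.toFinset.card := by
    field_simp; ring
  have h3 := mul_le_mul_of_nonneg_right h1 (by positivity : (0 : ℝ) ≤ (N : ℝ) ^ 2)
  rw [h2] at h3
  linarith

/-- The weight of the node `v` (the `B v` of `le_dimH_of_tree`) in the Cantor construction of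
exponent `r`: the `r`-th power of `256` divided by the length of the window of `v`. -/
noncomputable def wt (τ : ℕ) (r : ℝ) (v : ℚ) : ℝ := (256 * (v.den : ℝ) ^ (τ * τ)) ^ r

/-- A scale `N` for the denominators of the children of a node whose window has length `L`. All
conditions hold for large `N`: the fourth since the Cesàro means of `1 / (i + 1)` tend to `0`, and
the last, which makes the children more numerous than their weight, since `r τ² < 2`. -/
theorem exists_scale (τ : ℕ) {r : ℝ} (hr : r * (τ * τ : ℕ) < 2) (q : ℕ) {L : ℝ}
    (hL : 0 < L) : ∃ N : ℕ, 8192 ≤ N ∧ 16 * q ≤ N ∧ 256 ≤ L * (N : ℝ) ^ 2 ∧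
      (N : ℝ)⁻¹ * ∑ i ∈ Finset.range N, 1 / ((i : ℝ) + 1) ≤ L / 96 ∧
      (256 * (N : ℝ) ^ (τ * τ)) ^ r ≤ L * (N : ℝ) ^ 2 / 128 := by
  have e1 : ∀ᶠ N : ℕ in atTop, 8192 ≤ N := eventually_ge_atTop _
  have e2 : ∀ᶠ N : ℕ in atTop, 16 * q ≤ N := eventually_ge_atTop _
  have e3 : ∀ᶠ N : ℕ in atTop, 256 / L ≤ (N : ℝ) :=
    tendsto_natCast_atTop_atTop.eventually_ge_atTop _
  have e4 : ∀ᶠ N : ℕ in atTop,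
      (N : ℝ)⁻¹ * ∑ i ∈ Finset.range N, 1 / ((i : ℝ) + 1) ≤ L / 96 :=
    ((tendsto_one_div_add_atTop_nhds_zero_nat (𝕜 := ℝ)).cesaro).eventually_le_const
      (by positivity)
  have e5 : ∀ᶠ N : ℕ in atTop,
      128 * (256 : ℝ) ^ r / L ≤ (N : ℝ) ^ (2 - r * (τ * τ : ℕ)) :=
    ((tendsto_rpow_atTop (by linarith)).comp tendsto_natCast_atTop_atTop).eventually_ge_atTop _
  obtain ⟨N, h1, h2, h3, h4, h5⟩ := (e1.and (e2.and (e3.and (e4.and e5)))).exists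
  have hN : (8192 : ℝ) ≤ N := by exact_mod_cast h1
  have hN0 : (0 : ℝ) < N := by linarith
  refine ⟨N, h1, h2, ?_, h4, ?_⟩
  · rw [div_le_iff₀ hL] at h3
    nlinarith
  · rw [Real.mul_rpow (by norm_num) (by positivity), ← Real.rpow_natCast, ← Real.rpow_mul hN0.le]
    rw [div_le_iff₀ hL] at h5
    have h6 : (N : ℝ) ^ 2 = (N : ℝ) ^ (2 - r * (τ * τ : ℕ)) * (N : ℝ) ^ (((τ * τ : ℕ) : ℝ) * r) := by
      rw [← Real.rpow_add hN0, ← Real.rpow_natCast]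
      congr 1; push_cast; ring
    rw [h6]
    have h7 : 0 < (N : ℝ) ^ (((τ * τ : ℕ) : ℝ) * r) := by positivity
    generalize (N : ℝ) ^ (((τ * τ : ℕ) : ℝ) * r) = X at *
    nlinarith [mul_le_mul_of_nonneg_right h5 h7.le]

/-- The children of a node `v` of the tree: they satisfy the hypotheses of `le_dimH_of_tree` for the
windows and the weight `wt`. -/
theorem exists_children {τ : ℕ} (hτ : 3 ≤ τ) {r : ℝ} (hr0 : 0 < r) (hr : r * (τ * τ : ℕ) < 2)
    {v : ℚ} (hv : 1344 ≤ v.den) :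
    ∃ (m : ℕ) (ε : ℝ) (w : ℕ → ℚ), 2 ≤ m ∧ 0 < ε ∧ (∀ i, v.den ≤ (w i).den) ∧
      (∀ i < m, v.den < (w i).den ∧ Avoids τ v (w i) ∧
        Icc (winLo τ (w i)) (winHi τ (w i)) ⊆ Icc (winLo τ v) (winHi τ v) ∧ wt τ r (w i) ≤ m) ∧
      (∀ i j, i < j → j < m → winHi τ (w i) + ((j : ℝ) - i) * ε ≤ winLo τ (w j)) ∧
      1 / (256 * (v.den : ℝ) ^ (τ * τ)) ≤ m * ε := by
  have hq : (1344 : ℝ) ≤ v.den := by exact_mod_cast hv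
  obtain ⟨L, hL⟩ : ∃ L, L = 1 / (v.den : ℝ) ^ (τ * τ) := ⟨_, rfl⟩
  have hL0 : 0 < L := by rw [hL]; positivity
  obtain ⟨N, hN1, hN2, hN3, hN4, hN5⟩ := exists_scale τ hr v.den hL0
  obtain ⟨R, hR1, hR2⟩ := exists_many hτ hv hN1 hL (winLo τ v) hN4
  have hN : (8192 : ℝ) ≤ N := by exact_mod_cast hN1
  have hmem : ∀ i < R.card, nth R v i ∈ R := fun i hi => nth_mem hi
  have hden : ∀ i < R.card, v.den < (nth R v i).den := by
    intro i hi
    have := (hR1 _ (hmem i hi)).2.1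
    omega
  have hwin : ∀ w ∈ R, (w : ℝ) ≤ winLo τ w ∧ winHi τ w ≤ w + 1 / (2 * (N : ℝ) ^ 2) := by
    intro w hw
    obtain ⟨h1, h2, -⟩ := hR1 w hw
    have hd16 : 16 ≤ w.den := by omega
    have hle : winLo τ w ≤ winHi τ w := by
      simp only [winLo, winHi]
      have : 1 / (w.den : ℝ) ^ (τ * τ) ≤ 2 / (w.den : ℝ) ^ (τ * τ) := by gcongr; norm_num
      linarith
    have a1 := (win_near hτ hd16 (left_mem_Icc.2 hle)).1
    have a2 := (win_near hτ hd16 (right_mem_Icc.2 hle)).2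
    have a3 : 0 ≤ 1 / (2 * (w.den : ℝ) ^ τ) := by positivity
    refine ⟨by linarith, ?_⟩
    have a4 : 1 / (w.den : ℝ) ^ τ ≤ 1 / (2 * (N : ℝ) ^ 2) := by
      refine one_div_le_one_div_of_le (by positivity) ?_
      have hd : (N : ℝ) / 16 ≤ w.den := by
        have : (N : ℝ) < 16 * w.den := by exact_mod_cast h2
        linarith
      have hd1 : (1 : ℝ) ≤ w.den := by linarith
      calc 2 * (N : ℝ) ^ 2 ≤ ((N : ℝ) / 16) ^ 3 := by nlinarith [sq_nonneg (N : ℝ)]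
        _ ≤ (w.den : ℝ) ^ 3 := by gcongr
        _ ≤ _ := pow_le_pow_right₀ hd1 hτ
    linarith
  refine ⟨R.card, 1 / (2 * (N : ℝ) ^ 2), nth R v, ?_, by positivity, ?_, ?_, ?_, ?_⟩
  · have : (2 : ℝ) ≤ R.card := by linarith
    exact_mod_cast this
  · intro i
    by_cases hi : i < R.card
    · exact (hden i hi).le
    · rw [nth, dif_neg hi]
  · intro i hi
    obtain ⟨h1, h2, h3, h4, h5⟩ := hR1 _ (hmem i hi)
    obtain ⟨g1, g2⟩ := hwin _ (hmem i hi)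
    refine ⟨hden i hi, h3, ?_, ?_⟩
    · have h6 : winHi τ v = winLo τ v + L := by
        simp only [winLo, winHi, hL]; ring
      have h7 : 16 / (N : ℝ) ^ 2 ≤ L / 16 := by
        rw [div_le_div_iff₀ (by positivity) (by norm_num)]; linarith
      have h8 : 1 / (2 * (N : ℝ) ^ 2) ≤ 16 / (N : ℝ) ^ 2 := by
        rw [div_le_div_iff₀ (by positivity) (by positivity)]; nlinarith [sq_nonneg (N : ℝ)]
      exact Icc_subset_Icc (by linarith) (by linarith)
    · refine le_trans ?_ (hN5.trans hR2)
      rw [wt]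
      have : ((nth R v i).den : ℝ) ≤ N := by exact_mod_cast h1
      gcongr
  · intro i j hij hj
    have h1 := nth_sep (v := v) (fun w hw => (hR1 w hw).1) hij.le hj
    have g1 := (hwin _ (hmem i (by omega))).2
    have g2 := (hwin _ (hmem j hj)).1
    have hd : (1 : ℝ) ≤ (j : ℝ) - i := by
      have : (i : ℝ) + 1 ≤ j := by exact_mod_cast hij
      linarith
    have h2 : ((j : ℝ) - i) / (N : ℝ) ^ 2 = ((j : ℝ) - i) * (1 / (2 * (N : ℝ) ^ 2)) +
        ((j : ℝ) - i) * (1 / (2 * (N : ℝ) ^ 2)) := by field_simp; norm_num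
    have h3 : 0 < 1 / (2 * (N : ℝ) ^ 2) := by positivity
    nlinarith
  · have h1 : 1 / (256 * (v.den : ℝ) ^ (τ * τ)) = L / 256 := by rw [hL]; field_simp
    rw [h1, mul_one_div, div_le_div_iff₀ (by norm_num) (by positivity)]
    linarith

/-- The lower bound. The nodes of the tree are the rationals of denominator at least `1344`. -/
theorem le_dimH_ESet {τ : ℕ} (hτ : 3 ≤ τ) {C : ℝ} (hC : 2 ≤ C) {r : ℝ} (hr0 : 0 < r)
    (hr : r * (τ * τ : ℕ) < 2) :
    ENNReal.ofReal r ≤ dimH (ESet (fun q : ℝ => q ^ (-(τ : ℝ)))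
        (fun q : ℝ => C * q ^ (-((τ : ℝ) * ((τ : ℝ) - 1))))) := by
  have hr1 : r ≤ 1 := by
    have : (2 : ℝ) ≤ (τ * τ : ℕ) := by exact_mod_cast (by nlinarith : 2 ≤ τ * τ)
    nlinarith
  have H := fun v : {v : ℚ // 1344 ≤ v.den} => exists_children hτ hr0 hr v.2
  choose m ε w hm hε hwd hch hsep hmε using H
  have hroot : 1344 ≤ (1 / 1344 : ℚ).den := by norm_num
  have hwt1 : ∀ v : {v : ℚ // 1344 ≤ v.den}, 1 ≤ wt τ r v.1 := by
    intro v
    have : (1344 : ℝ) ≤ v.1.den := by exact_mod_cast v.2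
    refine Real.one_le_rpow ?_ hr0.le
    have : (1 : ℝ) ≤ (v.1.den : ℝ) ^ (τ * τ) := one_le_pow₀ (by linarith)
    linarith
  refine le_dimH_of_tree (fun v => winLo τ v.1) (fun v => winHi τ v.1) ε (fun v => wt τ r v.1) m
    (fun v i => ⟨w v i, v.2.trans (hwd v i)⟩) hr0 hr1 hm hε ?_ (fun v i hi => (hch v i hi).2.2.1)
    hsep (fun v => lt_of_lt_of_le one_pos (hwt1 v)) ?_ ?_ ⟨1 / 1344, hroot⟩ _ ?_
  · intro v
    simp only [winLo, winHi]
    have : 1 / (v.1.den : ℝ) ^ (τ * τ) ≤ 2 / (v.1.den : ℝ) ^ (τ * τ) := by gcongr; norm_num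
    linarith
  · intro v
    have hq : (0 : ℝ) < 256 * (v.1.den : ℝ) ^ (τ * τ) := by
      have : (0 : ℝ) < v.1.den := by exact_mod_cast v.1.den_pos
      positivity
    have h1 : (1 / (256 * (v.1.den : ℝ) ^ (τ * τ))) ^ r ≤ (m v * ε v) ^ r :=
      Real.rpow_le_rpow (by positivity) (hmε v) hr0.le
    have h2 : wt τ r v.1 * (1 / (256 * (v.1.den : ℝ) ^ (τ * τ))) ^ r = 1 := by
      rw [wt, ← Real.mul_rpow hq.le (by positivity), mul_one_div_cancel hq.ne', Real.one_rpow]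
    rw [← h2]
    exact mul_le_mul_of_nonneg_left h1 (by linarith [hwt1 v])
  · intro v i hi
    refine (hch v i hi).2.2.2.trans ?_
    exact le_mul_of_one_le_right (Nat.cast_nonneg _) (hwt1 v)
  · intro x v _ hstep hx
    refine mem_ESet_of_chain hτ hC (fun k => (v k).1) (fun k => le_trans (by norm_num) (v k).2)
      ?_ ?_ hx
    · intro k
      obtain ⟨i, hi, he⟩ := hstep k
      simp only [he]
      exact (hch _ i hi).1
    · intro k
      obtain ⟨i, hi, he⟩ := hstep k
      simp only [he]
      exact (hch _ i hi).2.1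

/-! ### Upper bound and conclusion -/

/-- A bounded approximable number has approximations `p / q` with `q` arbitrarily large; for each
`q` only the numerators with `|p| ≤ (M + 1) q` matter. -/
theorem exists_large_denominator {x : ℝ} {τ M : ℕ} (hxM : |x| ≤ M)
    (h : {pq : ℤ × ℕ | 0 < pq.2 ∧ |x - (pq.1 : ℝ) / (pq.2 : ℝ)| ≤ 1 / (pq.2 : ℝ) ^ τ}.Infinite)
    (n : ℕ) : ∃ (p : ℤ) (q : ℕ), n ≤ q ∧ 0 < q ∧ |x - p / q| ≤ 1 / (q : ℝ) ^ τ ∧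
      p ∈ Finset.Icc (-(((M + 1) * q : ℕ) : ℤ)) (((M + 1) * q : ℕ) : ℤ) := by
  have hp : ∀ (p : ℤ) (q : ℕ), 0 < q → |x - p / q| ≤ 1 / (q : ℝ) ^ τ →
      p ∈ Finset.Icc (-(((M + 1) * q : ℕ) : ℤ)) (((M + 1) * q : ℕ) : ℤ) := by
    intro p q hq hx
    have hq1 : (1 : ℝ) ≤ q := by exact_mod_cast hq
    have h1 : 1 / (q : ℝ) ^ τ ≤ 1 := by
      rw [div_le_one (by positivity)]; exact one_le_pow₀ hq1
    have h2 : |(p : ℝ) / q| ≤ M + 1 := by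
      have := abs_sub_abs_le_abs_sub ((p : ℝ) / q) x
      rw [abs_sub_comm] at this
      linarith
    rw [abs_div, abs_of_pos (by linarith : (0 : ℝ) < q), div_le_iff₀ (by linarith), abs_le] at h2
    rw [Finset.mem_Icc]
    constructor
    · have := h2.1
      exact_mod_cast (by push_cast; linarith : -((((M + 1) * q : ℕ) : ℤ) : ℝ) ≤ (p : ℝ))
    · have := h2.2
      exact_mod_cast this
  by_contra hcon
  push Not at hcon
  refine h (Set.Finite.subset (Finset.finite_toSet
    (Finset.Icc (-(((M + 1) * n : ℕ) : ℤ)) (((M + 1) * n : ℕ) : ℤ) ×ˢ Finset.range n)) ?_)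
  rintro ⟨p, q⟩ ⟨hq, hx⟩
  have h1 := hp p q hq hx
  have h2 : q < n := by
    by_contra h3
    exact hcon p q (by omega) hq hx h1
  rw [Finset.mem_coe, Finset.mem_product, Finset.mem_Icc, Finset.mem_range]
  rw [Finset.mem_Icc] at h1
  have h3 : (((M + 1) * q : ℕ) : ℤ) ≤ (((M + 1) * n : ℕ) : ℤ) := by
    exact_mod_cast Nat.mul_le_mul_left _ h2.le
  exact ⟨⟨by linarith [h1.1], by linarith [h1.2]⟩, h2⟩

open MeasureTheory in
/-- The upper bound, by covering: the points of `E(Ψ, ω)` in `[-M, M]` lie, for every `n`, in the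
union over `q ≥ n` and `|p| ≤ (M + 1) q` of the intervals of radius `C q^(-τ²)` around
`p / q ± q^(-τ)`, and `∑ q · q^(-τ² d)` converges. -/
theorem dimH_ESet_le {τ : ℕ} (hτ : 3 ≤ τ) {C : ℝ} (hC : 0 < C) {d : ℝ} (hd0 : 0 < d)
    (hd : 2 < d * (τ * τ : ℕ)) :
    dimH (ESet (fun q : ℝ => q ^ (-(τ : ℝ)))
        (fun q : ℝ => C * q ^ (-((τ : ℝ) * ((τ : ℝ) - 1))))) ≤ ENNReal.ofReal d := by
  set E := ESet (fun q : ℝ => q ^ (-(τ : ℝ)))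
        (fun q : ℝ => C * q ^ (-((τ : ℝ) * ((τ : ℝ) - 1)))) with hE
  have hEU : E ⊆ ⋃ M : ℕ, E ∩ {x | |x| ≤ M} := by
    intro x hx
    obtain ⟨M, hM⟩ := exists_nat_ge |x|
    exact mem_iUnion.2 ⟨M, hx, hM⟩
  refine (dimH_mono hEU).trans ?_
  rw [dimH_iUnion]
  refine iSup_le fun M => ?_
  have hdc : ((d.toNNReal : NNReal) : ℝ) = d := Real.coe_toNNReal _ hd0.le
  refine dimH_le_of_hausdorffMeasure_ne_top (d := d.toNNReal) ?_
  rw [hdc]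
  classical
  -- The covering intervals are indexed by (sign, denominator, numerator); irrelevant indices, as
  -- decided by `ok`, get the empty set.
  set ρ : ℕ → ℝ := fun q => C / (q : ℝ) ^ (τ * τ) with hρ
  set ctr : Bool × ℕ × ℤ → ℝ := fun i =>
    (i.2.2 : ℝ) / i.2.1 + (if i.1 then 1 else -1) * (1 / (i.2.1 : ℝ) ^ τ) with hctr
  set ok : ℕ → Bool × ℕ × ℤ → Prop := fun n i => n ≤ i.2.1 ∧ 0 < i.2.1 ∧
    i.2.2 ∈ Finset.Icc (-(((M + 1) * i.2.1 : ℕ) : ℤ)) (((M + 1) * i.2.1 : ℕ) : ℤ) with hok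
  set t : ℕ → Bool × ℕ × ℤ → Set ℝ := fun n i =>
    if ok n i then Icc (ctr i - ρ i.2.1) (ctr i + ρ i.2.1) else ∅ with ht
  have hdiam : ∀ n i, Metric.ediam (t n i) ≤ if ok n i then ENNReal.ofReal (2 * ρ i.2.1) else 0 := by
    intro n i
    simp only [ht]
    split_ifs with h
    · rw [Real.ediam_Icc]; apply ENNReal.ofReal_le_ofReal; linarith
    · simp
  have key := Measure.hausdorffMeasure_le_liminf_tsum (ι := fun _ => Bool × ℕ × ℤ) d
    (E ∩ {x | |x| ≤ M}) (l := atTop)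
    (fun n : ℕ => ENNReal.ofReal (2 * C / n)) ?_ t ?_ ?_
  · set f : ℕ → ENNReal := fun q =>
      ENNReal.ofReal ((2 * M + 3) * (2 * C) ^ d * (q : ℝ) ^ (1 - d * (τ * τ : ℕ))) with hf
    have hfsum : ∑' q, f q ≠ ⊤ := by
      refine Summable.tsum_ofReal_ne_top ?_
      exact (Real.summable_nat_rpow.2 (by linarith)).mul_left _
    have hbound : ∀ n, ∑' i, Metric.ediam (t n i) ^ d ≤ 2 * ∑' q, f q := by
      intro n
      rw [ENNReal.tsum_prod']
      have hb : ∀ b : Bool, ∑' z : ℕ × ℤ, Metric.ediam (t n (b, z)) ^ d ≤ ∑' q, f q := by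
        intro b
        rw [ENNReal.tsum_prod']
        refine ENNReal.tsum_le_tsum fun q => ?_
        have hz : ∀ p ∉ Finset.Icc (-(((M + 1) * q : ℕ) : ℤ)) (((M + 1) * q : ℕ) : ℤ),
            Metric.ediam (t n (b, q, p)) ^ d = 0 := by
          intro p hp
          have : t n (b, q, p) = ∅ := by
            simp only [ht, hok]
            rw [if_neg (fun h => hp h.2.2)]
          rw [this]; simp [hd0]
        rw [tsum_eq_sum hz]
        rcases Nat.eq_zero_or_pos q with h0 | hq
        · refine le_of_eq_of_le (Finset.sum_eq_zero fun p _ => ?_) bot_le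
          have : t n (b, q, p) = ∅ := by
            simp only [ht, hok]
            rw [if_neg (fun h => by have h1 : 0 < q := h.2.1; omega)]
          rw [this]; simp [hd0]
        · have hq1 : (1 : ℝ) ≤ q := by exact_mod_cast hq
          have hρ0 : 0 ≤ ρ q := by simp only [hρ]; positivity
          refine (Finset.sum_le_card_nsmul _ _ (ENNReal.ofReal ((2 * ρ q) ^ d)) ?_).trans ?_
          · intro p _
            rw [← ENNReal.ofReal_rpow_of_nonneg (by positivity) hd0.le]
            refine ENNReal.rpow_le_rpow ((hdiam n _).trans ?_) hd0.le
            split_ifs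
            · exact le_rfl
            · exact bot_le
          · rw [nsmul_eq_mul, ← ENNReal.ofReal_natCast, ← ENNReal.ofReal_mul (Nat.cast_nonneg _)]
            apply ENNReal.ofReal_le_ofReal
            have hcard : ((Finset.Icc (-(((M + 1) * q : ℕ) : ℤ)) (((M + 1) * q : ℕ) : ℤ)).card : ℝ)
                ≤ (2 * M + 3) * q := by
              rw [Int.card_Icc]
              have : ((((M + 1) * q : ℕ) : ℤ) + 1 - -(((M + 1) * q : ℕ) : ℤ)).toNat =
                2 * ((M + 1) * q) + 1 := by omega
              rw [this]; push_cast; nlinarith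
            have hpow : (2 * ρ q) ^ d = (2 * C) ^ d * (q : ℝ) ^ (- (d * (τ * τ : ℕ))) := by
              have e1 : 2 * ρ q = 2 * C * (q : ℝ) ^ (-((τ * τ : ℕ) : ℝ)) := by
                simp only [hρ]
                rw [Real.rpow_neg (by linarith), Real.rpow_natCast]; ring
              rw [e1, Real.mul_rpow (by positivity) (by positivity), ← Real.rpow_mul (by linarith)]
              congr 2; ring
            have hq' : (q : ℝ) ^ (1 - d * (τ * τ : ℕ)) = q * (q : ℝ) ^ (- (d * (τ * τ : ℕ))) := by
              rw [sub_eq_add_neg, Real.rpow_add (by linarith), Real.rpow_one]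
            rw [hpow, hq']
            calc _ ≤ (2 * (M : ℝ) + 3) * q * ((2 * C) ^ d * (q : ℝ) ^ (- (d * (τ * τ : ℕ)))) := by
                  gcongr
              _ = _ := by ring
      rw [tsum_bool, two_mul]
      exact add_le_add (hb _) (hb _)
    refine ne_top_of_le_ne_top ?_ (key.trans ((liminf_le_liminf (Eventually.of_forall hbound)).trans_eq
      (liminf_const _)))
    exact ENNReal.mul_ne_top (by simp) hfsum
  · have := ENNReal.tendsto_ofReal (tendsto_const_div_atTop_nhds_zero_nat (2 * C))
    simpa using this
  · filter_upwards [eventually_ge_atTop 1] with n hn i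
    refine (hdiam n i).trans ?_
    split_ifs with h
    · apply ENNReal.ofReal_le_ofReal
      have hn' : (1 : ℝ) ≤ n := by exact_mod_cast hn
      have hnq : (n : ℝ) ≤ i.2.1 := by exact_mod_cast h.1
      have : (n : ℝ) ≤ (i.2.1 : ℝ) ^ (τ * τ) :=
        hnq.trans (le_self_pow₀ (by linarith) (by positivity))
      simp only [hρ]
      rw [← mul_div_assoc]
      gcongr
    · exact bot_le
  · refine Eventually.of_forall fun n => ?_
    rintro x ⟨⟨hW, Q, hQ⟩, hxM⟩
    simp only [WSet, mem_ofPred_eq, Psi_eq] at hW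
    obtain ⟨p, q, hq1, hq0, hpq, hp⟩ := exists_large_denominator hxM hW (max n Q)
    have h1 := hQ q ((le_max_right _ _).trans hq1) p
    simp only [omega_Psi_eq τ q hτ hq0 C] at h1
    have hmem : ∀ b : Bool, ok n (b, q, p) := fun b => ⟨(le_max_left _ _).trans hq1, hq0, hp⟩
    rcases le_total 0 (x - p / q) with hs | hs
    · rw [abs_of_nonneg hs] at h1 hpq
      refine mem_iUnion.2 ⟨(true, q, p), ?_⟩
      simp only [ht]
      rw [if_pos (hmem true)]
      simp only [hctr, hρ, if_true, mem_Icc]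
      have : 0 ≤ C / (q : ℝ) ^ (τ * τ) := by positivity
      constructor <;> linarith
    · rw [abs_of_nonpos hs] at h1 hpq
      refine mem_iUnion.2 ⟨(false, q, p), ?_⟩
      simp only [ht]
      rw [if_pos (hmem false)]
      simp only [hctr, hρ, mem_Icc]
      have : 0 ≤ C / (q : ℝ) ^ (τ * τ) := by positivity
      constructor <;> simp <;> linarith [one_div ((q : ℝ) ^ τ)]

/-- **Theorem.** For a natural number `τ₁ ≥ 3`, `Ψ(q) = q^(−τ₁)` and
`ω(q) = C·q^(−τ₁(τ₁−1))` with `C > (45/16)·8^τ₁`, one has `dim_H(E(Ψ,ω)) = 2/τ₁²`. -/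
theorem dimH_ESet_rpow_critical (τ₁ : ℕ) (hτ₁ : 3 ≤ τ₁) (C : ℝ)
    (hC : (45 / 16 : ℝ) * 8 ^ τ₁ < C) :
    dimH (ESet (fun q : ℝ => q ^ (-(τ₁ : ℝ)))
        (fun q : ℝ => C * q ^ (-((τ₁ : ℝ) * ((τ₁ : ℝ) - 1))))) =
      ENNReal.ofReal (2 / (τ₁ : ℝ) ^ 2) := by
  have hC2 : 2 ≤ C := by
    have : (1 : ℝ) ≤ 8 ^ τ₁ := one_le_pow₀ (by norm_num)
    linarith
  have hτpos : (0 : ℝ) < τ₁ := by exact_mod_cast (by omega : 0 < τ₁)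
  have hsq : ((τ₁ * τ₁ : ℕ) : ℝ) = (τ₁ : ℝ) ^ 2 := by push_cast; ring
  have hsq0 : (0 : ℝ) < (τ₁ : ℝ) ^ 2 := by positivity
  have hpos : 0 < 2 / (τ₁ : ℝ) ^ 2 := by positivity
  apply le_antisymm
  · refine le_of_forall_gt_imp_ge_of_dense fun b hb => ?_
    rcases eq_or_ne b ⊤ with rfl | hbt
    · exact le_top
    · rw [← ENNReal.ofReal_toReal hbt] at hb ⊢
      rw [ENNReal.ofReal_lt_ofReal_iff_of_nonneg hpos.le] at hb
      refine dimH_ESet_le hτ₁ (by linarith) (hpos.trans hb) ?_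
      rwa [hsq, ← div_lt_iff₀ hsq0]
  · refine le_of_forall_lt_imp_le_of_dense fun b hb => ?_
    have hbt : b ≠ ⊤ := hb.ne_top
    rw [← ENNReal.ofReal_toReal hbt] at hb ⊢
    rw [ENNReal.ofReal_lt_ofReal_iff hpos] at hb
    rcases eq_or_lt_of_le (ENNReal.toReal_nonneg (a := b)) with h0 | h0
    · rw [← h0]; simp
    · refine le_dimH_ESet hτ₁ hC2 h0 ?_
      rwa [hsq, ← lt_div_iff₀ hsq0]
end

section
/- Let τ₁ be a natural number with τ₁ ≥ 3 and let Ψ : (0,∞) → (0,∞) be given by Ψ(q) = q^{−τ₁}. If ω : (0,∞) → (0,∞) is given by ω(q) = c·q^{−τ₁(τ₁−1)} for some constant c ∈ (0,1), then E(Ψ,ω) = ∅. -/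
/-!
Write `t = τ₁`. If `x ∈ E(Ψ, ω)`, then for arbitrarily large `q` some `p/q` satisfies
`(1 - ω q) q⁻ᵗ ≤ |x - p/q| ≤ q⁻ᵗ`. The endpoint `p/q ± q⁻ᵗ` (with the sign of `x - p/q`) is a
rational number with denominator `q ^ t`, and its distance to `x` is at most
`ω q * q⁻ᵗ = c (q ^ t)⁻ᵗ = c Ψ(q ^ t)`. Membership in `E(Ψ, ω)` for the denominator `q ^ t` bounds
the same distance from below by `(1 - ω(q ^ t)) Ψ(q ^ t)`. Hence `1 - ω(q ^ t) ≤ c`, which fails for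
large `q` since `ω → 0` and `c < 1`.

That good approximations occur with arbitrarily large denominators is `exists_large_denominator`:
for bounded `q` only finitely many numerators are possible.
-/

open Filter Set

/-- If `Ψ ≤ 1` on positive integers, a `Ψ`-approximable number has good approximations with
arbitrarily large denominators. -/
lemma exists_large_denominator_s13 {Ψ : ℝ → ℝ} (hΨ : ∀ q : ℕ, 0 < q → Ψ q ≤ 1) {x : ℝ}
    (hx : x ∈ WSet Ψ) (N : ℕ) :
    ∃ p : ℤ, ∃ q : ℕ, N ≤ q ∧ 0 < q ∧ |x - (p : ℝ) / (q : ℝ)| ≤ Ψ q := by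
  by_contra! h
  refine hx (Set.Finite.subset
    (Set.Finite.prod (Set.finite_Icc (-⌈(N : ℝ) * (|x| + 1)⌉) ⌈(N : ℝ) * (|x| + 1)⌉)
      (Set.finite_Iio N)) ?_)
  rintro ⟨p, q⟩ ⟨hq, hpq⟩
  simp only at hq hpq
  have hqN : q < N := by
    by_contra! hN
    exact absurd hpq (not_le.mpr (h p q hN hq))
  have hq0 : (0 : ℝ) < q := by exact_mod_cast hq
  have hqN' : (q : ℝ) ≤ N := by exact_mod_cast hqN.le
  have h1 : |(p : ℝ) / q| ≤ |x| + 1 := by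
    have h2 := abs_sub_abs_le_abs_sub ((p : ℝ) / q) x
    rw [abs_sub_comm] at h2
    linarith [hΨ q hq]
  have h3 : |(p : ℝ)| ≤ N * (|x| + 1) := by
    rw [abs_div, abs_of_pos hq0, div_le_iff₀ hq0] at h1
    nlinarith [abs_nonneg x]
  have h4 : |p| ≤ ⌈(N : ℝ) * (|x| + 1)⌉ := by
    have : ((|p| : ℤ) : ℝ) ≤ (⌈(N : ℝ) * (|x| + 1)⌉ : ℤ) := by
      push_cast
      exact h3.trans (Int.le_ceil _)
    exact_mod_cast this
  exact ⟨abs_le.mp h4, hqN⟩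

/-- **Theorem.** For a natural number `τ₁ ≥ 3`, `Ψ(q) = q^(−τ₁)` and
`ω(q) = c·q^(−τ₁(τ₁−1))` with `c ∈ (0,1)`, one has `E(Ψ,ω) = ∅`. -/
theorem ESet_rpow_empty (τ₁ : ℕ) (hτ₁ : 3 ≤ τ₁) (c : ℝ) (hc : c ∈ Set.Ioo (0 : ℝ) 1) :
    ESet (fun q : ℝ => q ^ (-(τ₁ : ℝ)))
        (fun q : ℝ => c * q ^ (-((τ₁ : ℝ) * ((τ₁ : ℝ) - 1)))) = ∅ := by
  obtain ⟨hc0, hc1⟩ := hc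
  obtain ⟨k, rfl⟩ : ∃ k, τ₁ = k + 1 := ⟨τ₁ - 1, by omega⟩
  have hk : 2 ≤ k := by omega
  have hΨ : ∀ q : ℕ, (q : ℝ) ^ (-((k + 1 : ℕ) : ℝ)) = ((q : ℝ) ^ (k + 1))⁻¹ := fun q => by
    rw [Real.rpow_neg (Nat.cast_nonneg q), Real.rpow_natCast]
  have hω : ∀ q : ℕ, (q : ℝ) ^ (-(((k + 1 : ℕ) : ℝ) * (((k + 1 : ℕ) : ℝ) - 1)))
      = ((q : ℝ) ^ ((k + 1) * k))⁻¹ := fun q => by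
    rw [Real.rpow_neg (Nat.cast_nonneg q), ← Real.rpow_natCast]
    push_cast
    ring_nf
  rw [Set.eq_empty_iff_forall_notMem]
  rintro x ⟨hW, Q, hQ⟩
  simp only [hΨ, hω] at hQ
  obtain ⟨M, hM⟩ := exists_nat_gt (c / (1 - c))
  obtain ⟨p, q, hqN, hq, hpq⟩ := exists_large_denominator_s13 (fun q hq => by
    rw [hΨ]
    have : (1 : ℝ) ≤ q := by exact_mod_cast hq
    exact inv_le_one_of_one_le₀ (one_le_pow₀ this)) hW (max Q M)
  rw [hΨ] at hpq
  have hq1 : (1 : ℝ) ≤ q := by exact_mod_cast hq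
  have hqpow : q ≤ q ^ (k + 1) := Nat.le_self_pow (by omega) q
  have hlow := hQ q ((le_max_left _ _).trans hqN) p
  -- `s` is the sign of `x - p/q`.
  obtain ⟨s, hs, hxs⟩ : ∃ s : ℤ, |(s : ℝ)| = 1 ∧
      x - (p : ℝ) / q = s * |x - (p : ℝ) / q| := by
    rcases le_total 0 (x - (p : ℝ) / q) with h | h
    · exact ⟨1, by simp, by rw [abs_of_nonneg h]; simp⟩
    · exact ⟨-1, by simp, by rw [abs_of_nonpos h]; simp⟩
  have hlow2 := hQ (q ^ (k + 1)) (((le_max_left _ _).trans hqN).trans hqpow) (p * q ^ k + s)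
  have hdist : |x - ((p * q ^ k + s : ℤ) : ℝ) / ((q ^ (k + 1) : ℕ) : ℝ)|
      = ((q : ℝ) ^ (k + 1))⁻¹ - |x - (p : ℝ) / q| := by
    have h1 : x - ((p * q ^ k + s : ℤ) : ℝ) / ((q ^ (k + 1) : ℕ) : ℝ)
        = s * (|x - (p : ℝ) / q| - ((q : ℝ) ^ (k + 1))⁻¹) := by
      have h2 : ((p * q ^ k + s : ℤ) : ℝ) / ((q ^ (k + 1) : ℕ) : ℝ)
          = (p : ℝ) / q + s * ((q : ℝ) ^ (k + 1))⁻¹ := by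
        push_cast
        field_simp
        ring
      rw [h2, mul_sub, ← hxs]
      ring
    rw [h1, abs_mul, hs, one_mul, abs_of_nonpos (by linarith)]
    ring
  rw [hdist] at hlow2
  push_cast at hlow2
  -- `ω(q) Ψ(q) = c Ψ(q ^ t)`, which is where the exponent `t (t - 1)` is used.
  have hexp : ((q : ℝ) ^ ((k + 1) * k))⁻¹ * ((q : ℝ) ^ (k + 1))⁻¹
      = (((q : ℝ) ^ (k + 1)) ^ (k + 1))⁻¹ := by
    rw [← mul_inv, ← pow_add, ← pow_mul]
    ring_nf
  have hpos : 0 < (((q : ℝ) ^ (k + 1)) ^ (k + 1))⁻¹ := by positivity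
  have hkey : 1 - c * (((q : ℝ) ^ (k + 1)) ^ ((k + 1) * k))⁻¹ ≤ c := by
    refine le_of_mul_le_mul_right ?_ hpos
    rw [← hexp] at hlow2 ⊢
    linarith
  have hsmall : (((q : ℝ) ^ (k + 1)) ^ ((k + 1) * k))⁻¹ ≤ (q : ℝ)⁻¹ := by
    apply inv_anti₀ (by linarith)
    rw [← pow_mul]
    exact le_self_pow₀ hq1 (by positivity)
  have hqM : c / (1 - c) < q := hM.trans_le (by exact_mod_cast (le_max_right _ _).trans hqN)
  rw [div_lt_iff₀ (by linarith)] at hqM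
  have hfin : c * (q : ℝ)⁻¹ < 1 - c := by
    rw [← div_eq_mul_inv, div_lt_iff₀ (by linarith)]
    linarith
  nlinarith [mul_le_mul_of_nonneg_left hsmall hc0.le]
end
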